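/- arXiv:1711.07409 — 2 statements merged into one kernel-verified Lean document; each statement's English description precedes it below -/
import Mathlib

section
/- Let X be a finite-dimensional smooth TS-module and s a natural number. Then every short exact sequence of TS-modules 0 → X → E → 𝕊^s → 0 splits; more precisely, the subgroup E(S) = ker(E → E_S) of E is a TS-submodule isomorphic to 𝕊^s and gives a splitting. -/
noncomputable section

open scoped Classical

namespace PSW

/-! ### The affine group `λ.b : x ↦ λ·x + b` over a field `K`. -/

@[ext]
structure Aff (K : Type*) [Field K] where
  t : Kˣ
  s : K

namespace Aff

variable {K : Type*} [Field K]

instance : Mul (Aff K) := ⟨fun g h => ⟨g.t * h.t, g.s + (g.t : K) * h.s⟩⟩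
instance : One (Aff K) := ⟨⟨1, 0⟩⟩
instance : Inv (Aff K) := ⟨fun g => ⟨g.t⁻¹, -(((g.t⁻¹ : Kˣ) : K) * g.s)⟩⟩

@[simp] lemma mul_t (g h : Aff K) : (g * h).t = g.t * h.t := rfl
@[simp] lemma mul_s (g h : Aff K) : (g * h).s = g.s + (g.t : K) * h.s := rfl
@[simp] lemma one_t : (1 : Aff K).t = 1 := rfl
@[simp] lemma one_s : (1 : Aff K).s = 0 := rfl
@[simp] lemma inv_t (g : Aff K) : (g⁻¹).t = g.t⁻¹ := rfl
@[simp] lemma inv_s (g : Aff K) : (g⁻¹).s = -(((g.t⁻¹ : Kˣ) : K) * g.s) := rfl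

instance : Group (Aff K) where
  mul_assoc a b c := by
    ext
    · simp [mul_assoc]
    · simp only [mul_s, mul_t, Units.val_mul]; ring
  one_mul a := by ext <;> simp
  mul_one a := by ext <;> simp
  inv_mul_cancel a := by
    ext
    · simp
    · simp

/-- The element `x_λ` of the group `TS`. -/
def xT (u : Kˣ) : Aff K := ⟨u, 0⟩

/-- The element `s_b` of the group `TS`. -/
def sS (b : K) : Aff K := ⟨1, b⟩

@[simp] lemma xT_t (u : Kˣ) : (xT u : Aff K).t = u := rfl
@[simp] lemma xT_s (u : Kˣ) : (xT u : Aff K).s = 0 := rfl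
@[simp] lemma sS_t (b : K) : (sS b : Aff K).t = 1 := rfl
@[simp] lemma sS_s (b : K) : (sS b : Aff K).s = b := rfl

/-- `T ≅ k^×` as a subgroup of `TS`. -/
def xTHom : Kˣ →* Aff K where
  toFun := xT
  map_one' := rfl
  map_mul' u v := by ext <;> simp [xT]

@[simp] lemma xTHom_apply (u : Kˣ) : (xTHom u : Aff K) = xT u := rfl

lemma mul_sS (g : Aff K) (b : K) : g * sS b = sS ((g.t : K) * b) * g := by
  ext
  · simp
  · simp [add_comm]

lemma sS_mul (b : K) (g : Aff K) : sS b * g = g * sS (((g.t⁻¹ : Kˣ) : K) * b) := by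
  ext
  · simp
  · simp [Units.mul_inv_cancel_left, add_comm]

lemma aff_decomp (g : Aff K) : g = xT g.t * sS (((g.t⁻¹ : Kˣ) : K) * g.s) := by
  ext
  · simp
  · simp [Units.mul_inv_cancel_left]

instance [TopologicalSpace K] : TopologicalSpace (Aff K) :=
  TopologicalSpace.induced (fun g : Aff K => ((g.t, g.s) : Kˣ × K)) inferInstance

end Aff

/-! ### Generalities on representations of a monoid on complex vector spaces. -/

namespace GRep

variable {G : Type*} [Monoid G]

section MonoidModules

variable {V W : Type*} [AddCommMonoid V] [Module ℂ V] [AddCommMonoid W] [Module ℂ W]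

/-- A submodule invariant under the representation. -/
def Invariant (ρ : Representation ℂ G V) (U : Submodule ℂ V) : Prop :=
  ∀ (g : G) (v : V), v ∈ U → ρ g v ∈ U

/-- Equivariance of a linear map with respect to two representations. -/
def Equivariant (ρ : Representation ℂ G V) (σ : Representation ℂ G W) (f : V →ₗ[ℂ] W) : Prop :=
  ∀ (g : G) (v : V), f (ρ g v) = σ g (f v)

/-- Isomorphism of representations. -/
def Iso (ρ : Representation ℂ G V) (σ : Representation ℂ G W) : Prop :=
  ∃ e : V ≃ₗ[ℂ] W, ∀ (g : G) (v : V), e (ρ g v) = σ g (e v)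

/-- Irreducibility. -/
def Irred (ρ : Representation ℂ G V) : Prop :=
  Nontrivial V ∧ ∀ U : Submodule ℂ V, Invariant ρ U → U = ⊥ ∨ U = ⊤

/-- Subrepresentation on an invariant submodule. -/
def sub (ρ : Representation ℂ G V) {U : Submodule ℂ V} (hU : Invariant ρ U) :
    Representation ℂ G ↥U where
  toFun g := (ρ g).restrict fun v hv => hU g v hv
  map_one' := by
    apply LinearMap.ext; intro v; apply Subtype.ext
    simp [LinearMap.restrict_apply]
  map_mul' g h := by
    apply LinearMap.ext; intro v; apply Subtype.ext
    simp [LinearMap.restrict_apply]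

@[simp] lemma sub_apply (ρ : Representation ℂ G V) {U : Submodule ℂ V} (hU : Invariant ρ U)
    (g : G) (v : ↥U) : ((sub ρ hU g v : ↥U) : V) = ρ g (v : V) := rfl

lemma ker_invariant (ρ : Representation ℂ G V) (σ : Representation ℂ G W)
    (f : V →ₗ[ℂ] W) (hf : Equivariant ρ σ f) : Invariant ρ (LinearMap.ker f) := by
  intro g v hv
  rw [LinearMap.mem_ker] at hv ⊢
  rw [hf g v, hv, map_zero]

lemma range_invariant (ρ : Representation ℂ G V) (σ : Representation ℂ G W)
    (f : V →ₗ[ℂ] W) (hf : Equivariant ρ σ f) : Invariant σ (LinearMap.range f) := by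
  rintro g w ⟨v, rfl⟩
  exact ⟨ρ g v, hf g v⟩

lemma map_invariant (ρ : Representation ℂ G V) (σ : Representation ℂ G W)
    (f : V →ₗ[ℂ] W) (hf : Equivariant ρ σ f) (U : Submodule ℂ V) (hU : Invariant ρ U) :
    Invariant σ (U.map f) := by
  rintro g w ⟨v, hv, rfl⟩
  exact ⟨ρ g v, hU g v hv, hf g v⟩

end MonoidModules

section GroupModules

variable {V W : Type*} [AddCommGroup V] [Module ℂ V] [AddCommGroup W] [Module ℂ W]

/-- Quotient representation. -/
def quot (ρ : Representation ℂ G V) (U : Submodule ℂ V) (hU : Invariant ρ U) :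
    Representation ℂ G (V ⧸ U) where
  toFun g := U.mapQ U (ρ g) fun v hv => hU g v hv
  map_one' := by
    apply LinearMap.ext; intro x
    obtain ⟨v, rfl⟩ := Submodule.Quotient.mk_surjective U x
    simp [Submodule.mapQ_apply]
  map_mul' g h := by
    apply LinearMap.ext; intro x
    obtain ⟨v, rfl⟩ := Submodule.Quotient.mk_surjective U x
    simp [Submodule.mapQ_apply]

@[simp] lemma quot_apply (ρ : Representation ℂ G V) (U : Submodule ℂ V) (hU : Invariant ρ U)
    (g : G) (v : V) :
    quot ρ U hU g (Submodule.Quotient.mk v) = Submodule.Quotient.mk (ρ g v) := rfl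

/-- Subquotient representation on `B/A`. -/
def subquot (ρ : Representation ℂ G V) {A B : Submodule ℂ V}
    (hA : Invariant ρ A) (hB : Invariant ρ B) :
    Representation ℂ G (↥B ⧸ A.comap B.subtype) :=
  quot (sub ρ hB) (A.comap B.subtype) fun g v hv => hA g v.1 hv

lemma mkQ_equivariant (ρ : Representation ℂ G V) (U : Submodule ℂ V) (hU : Invariant ρ U) :
    Equivariant ρ (quot ρ U hU) U.mkQ := by
  intro g v
  show Submodule.Quotient.mk (ρ g v) = quot ρ U hU g (Submodule.Quotient.mk v)
  rw [quot_apply]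

end GroupModules

end GRep

/-! ### TS-modules: representations of the affine group. -/

/-- A `TS`-module structure on `V` is a representation of the group `TS ≅ Gl_a(1)`. -/
abbrev Rep (K : Type*) [Field K] (V : Type*) [AddCommGroup V] [Module ℂ V] :=
  Representation ℂ (Aff K) V

section RepDefs

open Aff

variable {K : Type*} [Field K]
variable {V W : Type*} [AddCommGroup V] [Module ℂ V] [AddCommGroup W] [Module ℂ W]

/-- Smoothness: every vector has open stabilizer. -/
def IsSmoothRep [TopologicalSpace K] (ρ : Rep K V) : Prop :=
  ∀ v : V, IsOpen {g : Aff K | ρ g v = v}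

/-- Smoothness of a `T`-module, i.e. of a representation of `T ≅ k^×`. -/
def TIsSmooth {X : Type*} [AddCommMonoid X] [Module ℂ X] [TopologicalSpace K]
    (τ : Representation ℂ Kˣ X) : Prop :=
  ∀ x : X, IsOpen {u : Kˣ | τ u x = x}

/-- Smooth character of `T ≅ k^×` (open kernel, equivalently locally constant). -/
def SmoothMulChar [TopologicalSpace K] (χ : Kˣ →* ℂˣ) : Prop :=
  IsOpen {u : Kˣ | χ u = 1}

/-- The space `V^S` of `S`-invariants. -/
def sInv (ρ : Rep K V) : Submodule ℂ V where
  carrier := {v | ∀ b : K, ρ (sS b) v = v}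
  zero_mem' := fun b => map_zero _
  add_mem' {a b} ha hb := fun c => by rw [map_add, ha c, hb c]
  smul_mem' c v hv := fun b => by rw [map_smul, hv b]

@[simp] lemma mem_sInv (ρ : Rep K V) (v : V) :
    v ∈ sInv ρ ↔ ∀ b : K, ρ (sS b) v = v := Iff.rfl

/-- The `χ`-eigenspace `X^{T,χ}` of a `T`-module. -/
def tEigenT {X : Type*} [AddCommMonoid X] [Module ℂ X]
    (τ : Representation ℂ Kˣ X) (χ : Kˣ →* ℂˣ) : Submodule ℂ X where
  carrier := {x | ∀ u : Kˣ, τ u x = (χ u : ℂ) • x}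
  zero_mem' := fun u => by simp
  add_mem' {a b} ha hb := fun u => by rw [map_add, ha u, hb u, smul_add]
  smul_mem' c x hx := fun u => by rw [map_smul, hx u]; exact smul_comm c ((χ u : ℂ)) x

@[simp] lemma mem_tEigenT {X : Type*} [AddCommMonoid X] [Module ℂ X]
    (τ : Representation ℂ Kˣ X) (χ : Kˣ →* ℂˣ) (x : X) :
    x ∈ tEigenT τ χ ↔ ∀ u : Kˣ, τ u x = (χ u : ℂ) • x := Iff.rfl

/-- The `χ`-eigenspace `V^{T,χ}` of a `TS`-module. -/
def tEigen (ρ : Rep K V) (χ : Kˣ →* ℂˣ) : Submodule ℂ V := tEigenT (ρ.comp xTHom) χ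

/-- The kernel of the projection to the `S`-coinvariants `V_S`. -/
def sCoinvKer (ρ : Rep K V) : Submodule ℂ V :=
  Submodule.span ℂ {w : V | ∃ (b : K) (v : V), w = ρ (sS b) v - v}

/-- The kernel of the projection to the twisted coinvariants `V_{S,ψ'}`. -/
def sTwistKer (ρ : Rep K V) (ψ' : AddChar K ℂ) : Submodule ℂ V :=
  Submodule.span ℂ {w : V | ∃ (b : K) (v : V), w = ρ (sS b) v - ψ' b • v}

/-- The kernel of the projection to the `χ`-coinvariants `X_{T,χ}` of a `T`-module. -/
def tTwistKerT {X : Type*} [AddCommGroup X] [Module ℂ X]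
    (τ : Representation ℂ Kˣ X) (χ : Kˣ →* ℂˣ) : Submodule ℂ X :=
  Submodule.span ℂ {w : X | ∃ (u : Kˣ) (x : X), w = τ u x - (χ u : ℂ) • x}

/-- The kernel of the projection to the `χ`-coinvariants `V_{T,χ}` of a `TS`-module. -/
def tTwistKer (ρ : Rep K V) (χ : Kˣ →* ℂˣ) : Submodule ℂ V := tTwistKerT (ρ.comp xTHom) χ

lemma sCoinvKer_invariant (ρ : Rep K V) : GRep.Invariant ρ (sCoinvKer ρ) := by
  intro g v hv
  have h : sCoinvKer ρ ≤ Submodule.comap (ρ g) (sCoinvKer ρ) := by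
    refine Submodule.span_le.2 ?_
    rintro w ⟨b, v', rfl⟩
    simp only [SetLike.mem_coe, Submodule.mem_comap, map_sub]
    have h1 : ρ g (ρ (sS b) v') = ρ (sS ((g.t : K) * b)) (ρ g v') := by
      rw [← Module.End.mul_apply, ← map_mul, mul_sS, map_mul, Module.End.mul_apply]
    rw [h1]
    exact Submodule.subset_span ⟨(g.t : K) * b, ρ g v', rfl⟩
  exact h hv

lemma sInv_invariant (ρ : Rep K V) : GRep.Invariant ρ (sInv ρ) := by
  intro g v hv
  rw [mem_sInv] at hv ⊢
  intro b
  have h1 : ρ (sS b) (ρ g v) = ρ g (ρ (sS (((g.t⁻¹ : Kˣ) : K) * b)) v) := by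
    rw [← Module.End.mul_apply, ← map_mul, sS_mul, map_mul, Module.End.mul_apply]
  rw [h1, hv _]

/-- The `S`-coinvariants `π₀(V) = V_S` as a `TS`-module (`S` acting trivially). -/
def piZeroRep (ρ : Rep K V) : Rep K (V ⧸ sCoinvKer ρ) :=
  GRep.quot ρ (sCoinvKer ρ) (sCoinvKer_invariant ρ)

/-- The `S`-coinvariants `π₀(V) = V_S` as a `T`-module. -/
def piZeroT (ρ : Rep K V) : Representation ℂ Kˣ (V ⧸ sCoinvKer ρ) :=
  (piZeroRep ρ).comp xTHom

/-- The `T`-module structure on `κ(V) = V^S`. -/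
def sInvT (ρ : Rep K V) : Representation ℂ Kˣ ↥(sInv ρ) :=
  (GRep.sub ρ (sInv_invariant ρ)).comp xTHom

/-- A `TS`-module is perfect if all its eigenspaces `V^{T,χ}` for smooth `χ` vanish. -/
def Perfect [TopologicalSpace K] (ρ : Rep K V) : Prop :=
  ∀ χ : Kˣ →* ℂˣ, SmoothMulChar χ → tEigen ρ χ = ⊥

/-- A finite-dimensional `T`-module is cyclic if each generalized eigenspace is a single
Jordan block; equivalently all eigenspaces `X^{T,χ}` have dimension at most one. -/
def TCyclic {X : Type*} [AddCommGroup X] [Module ℂ X]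
    (τ : Representation ℂ Kˣ X) : Prop :=
  ∀ χ : Kˣ →* ℂˣ, Module.finrank ℂ ↥(tEigenT τ χ) ≤ 1

lemma sCoinvKer_le_comap (ρ : Rep K V) (σ : Rep K W)
    (f : V →ₗ[ℂ] W) (hf : GRep.Equivariant ρ σ f) :
    sCoinvKer ρ ≤ (sCoinvKer σ).comap f := by
  refine Submodule.span_le.2 ?_
  rintro w ⟨b, v, rfl⟩
  simp only [SetLike.mem_coe, Submodule.mem_comap, map_sub]
  rw [hf]
  exact Submodule.subset_span ⟨b, f v, rfl⟩

/-- The map induced by an equivariant map on the `S`-coinvariants `π₀`. -/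
def piZeroMap (ρ : Rep K V) (σ : Rep K W) (f : V →ₗ[ℂ] W) (hf : GRep.Equivariant ρ σ f) :
    (V ⧸ sCoinvKer ρ) →ₗ[ℂ] (W ⧸ sCoinvKer σ) :=
  Submodule.mapQ _ _ f (sCoinvKer_le_comap ρ σ f hf)

lemma piZeroMap_equivariant (ρ : Rep K V) (σ : Rep K W) (f : V →ₗ[ℂ] W)
    (hf : GRep.Equivariant ρ σ f) :
    GRep.Equivariant (piZeroRep ρ) (piZeroRep σ) (piZeroMap ρ σ f hf) := by
  intro g x
  obtain ⟨v, rfl⟩ := Submodule.Quotient.mk_surjective _ x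
  show piZeroMap ρ σ f hf (piZeroRep ρ g (Submodule.Quotient.mk v))
      = piZeroRep σ g (piZeroMap ρ σ f hf (Submodule.Quotient.mk v))
  rw [show piZeroRep ρ g (Submodule.Quotient.mk v) = Submodule.Quotient.mk (ρ g v) from rfl]
  rw [show piZeroMap ρ σ f hf (Submodule.Quotient.mk v) = Submodule.Quotient.mk (f v) from rfl]
  rw [show piZeroMap ρ σ f hf (Submodule.Quotient.mk (ρ g v))
      = Submodule.Quotient.mk (f (ρ g v)) from rfl]
  rw [show piZeroRep σ g (Submodule.Quotient.mk (f v)) = Submodule.Quotient.mk (σ g (f v)) from rfl]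
  rw [hf]

lemma kappaImg_invariant (ρ : Rep K V) :
    GRep.Invariant (piZeroT ρ) ((sInv ρ).map (sCoinvKer ρ).mkQ) := by
  rintro u w ⟨v, hv, rfl⟩
  refine ⟨ρ (xT u) v, sInv_invariant ρ (xT u) v hv, ?_⟩
  rfl

end RepDefs

/-! ### Composition series and degree. -/

/-- A composition series for a `TS`-module, witnessing finite length: a maximal chain of
invariant submodules (the subquotients are then irreducible). -/
structure CompSeries {K : Type*} [Field K] {V : Type*} [AddCommGroup V] [Module ℂ V]
    (ρ : Rep K V) where
  n : ℕ
  W : ℕ → Submodule ℂ V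
  bot : W 0 = ⊥
  top : W n = ⊤
  inv : ∀ i, GRep.Invariant ρ (W i)
  lt : ∀ i < n, W i < W (i + 1)
  maximal : ∀ i < n, ∀ C : Submodule ℂ V, GRep.Invariant ρ C → W i ≤ C → C ≤ W (i + 1) →
    C = W i ∨ C = W (i + 1)

/-- The number of Jordan–Hölder constituents of a composition series isomorphic to a given
representation `σ` (applied with `σ = 𝕊`, this is the degree). -/
def CompSeries.deg {K : Type*} [Field K] {V : Type*} [AddCommGroup V] [Module ℂ V]
    {ρ : Rep K V} (c : CompSeries ρ) {W₀ : Type*} [AddCommMonoid W₀] [Module ℂ W₀]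
    (σ : Representation ℂ (Aff K) W₀) : ℕ :=
  (Finset.univ.filter fun i : Fin c.n =>
    GRep.Iso (GRep.subquot ρ (c.inv i.1) (c.inv (i.1 + 1))) σ).card

/-! ### Fiber products of a `T`-module with a `TS`-module over a `T`-module. -/

section Fiber

open Aff

variable {K : Type*} [Field K]
variable {X Y E : Type*} [AddCommGroup X] [Module ℂ X] [AddCommGroup Y] [Module ℂ Y]
  [AddCommGroup E] [Module ℂ E]

/-- The product `TS`-module `X × E` where `S` acts trivially on the `T`-module `X`. -/
def prodRepTE (τ : Representation ℂ Kˣ X) (ρ : Rep K E) : Rep K (X × E) where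
  toFun g := (τ g.t).prodMap (ρ g)
  map_one' := by
    apply LinearMap.ext; rintro ⟨x, v⟩
    simp
  map_mul' g h := by
    apply LinearMap.ext; rintro ⟨x, v⟩
    simp [map_mul]

/-- The underlying space of the fiber product `𝔼[f] = X ×_Y E`. -/
def fiberKer (f : X →ₗ[ℂ] Y) (q : E →ₗ[ℂ] Y) : Submodule ℂ (X × E) :=
  LinearMap.ker (f.comp (LinearMap.fst ℂ X E) - q.comp (LinearMap.snd ℂ X E))

lemma mem_fiberKer (f : X →ₗ[ℂ] Y) (q : E →ₗ[ℂ] Y) (p : X × E) :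
    p ∈ fiberKer f q ↔ f p.1 = q p.2 := by
  simp [fiberKer, sub_eq_zero]

lemma fiber_invariant (τX : Representation ℂ Kˣ X) (ρE : Rep K E)
    (τY : Representation ℂ Kˣ Y) (f : X →ₗ[ℂ] Y) (q : E →ₗ[ℂ] Y)
    (hf : ∀ (u : Kˣ) (x : X), f (τX u x) = τY u (f x))
    (hq : sCoinvKer ρE ≤ LinearMap.ker q)
    (hqT : ∀ (u : Kˣ) (v : E), q (ρE (xT u) v) = τY u (q v)) :
    GRep.Invariant (prodRepTE τX ρE) (fiberKer f q) := by
  intro g p hp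
  rw [mem_fiberKer] at hp ⊢
  have hsb : q (ρE (sS (((g.t⁻¹ : Kˣ) : K) * g.s)) p.2) = q p.2 := by
    have h1 : ρE (sS (((g.t⁻¹ : Kˣ) : K) * g.s)) p.2 - p.2 ∈ sCoinvKer ρE :=
      Submodule.subset_span ⟨_, _, rfl⟩
    have h2 := hq h1
    rw [LinearMap.mem_ker, map_sub, sub_eq_zero] at h2
    exact h2
  have hdecomp : ρE g p.2 = ρE (xT g.t) (ρE (sS (((g.t⁻¹ : Kˣ) : K) * g.s)) p.2) := by
    conv_lhs => rw [aff_decomp g]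
    rw [map_mul, Module.End.mul_apply]
  have h1 : ((prodRepTE τX ρE) g p).1 = τX g.t p.1 := rfl
  have h2 : ((prodRepTE τX ρE) g p).2 = ρE g p.2 := rfl
  rw [h1, h2, hf, hp, hdecomp, hqT, hsb]

end Fiber

/-! ### Jordan blocks of finite-dimensional `T`-modules. -/

section Jordan

variable {K : Type*} [Field K]
variable {X : Type*} [AddCommGroup X] [Module ℂ X]

/-- A Jordan block of a `T`-module: a nonzero indecomposable invariant direct summand. -/
def IsJordanBlock (τ : Representation ℂ Kˣ X) (J : Submodule ℂ X) : Prop :=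
  J ≠ ⊥ ∧ GRep.Invariant τ J ∧ (∃ C : Submodule ℂ X, GRep.Invariant τ C ∧ IsCompl J C) ∧
    ∀ A B : Submodule ℂ X, GRep.Invariant τ A → GRep.Invariant τ B → A ≤ J → B ≤ J →
      A ⊓ B = ⊥ → A ⊔ B = J → A = ⊥ ∨ B = ⊥

end Jordan

/-! ### Invariants and coinvariants for a normal subgroup of an arbitrary group. -/

section Grp

variable {Γ : Type*} [Group Γ]
variable {V W : Type*} [AddCommGroup V] [Module ℂ V] [AddCommGroup W] [Module ℂ W]

/-- Invariants `V^N` under a subgroup `N`. -/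
def grpInv (ρ : Representation ℂ Γ V) (N : Subgroup Γ) : Submodule ℂ V where
  carrier := {v | ∀ n ∈ N, ρ n v = v}
  zero_mem' := fun n _ => map_zero _
  add_mem' {a b} ha hb := fun n hn => by rw [map_add, ha n hn, hb n hn]
  smul_mem' c v hv := fun n hn => by rw [map_smul, hv n hn]

@[simp] lemma mem_grpInv (ρ : Representation ℂ Γ V) (N : Subgroup Γ) (v : V) :
    v ∈ grpInv ρ N ↔ ∀ n ∈ N, ρ n v = v := Iff.rfl

/-- The kernel of the projection to the coinvariants `V_N` under a subgroup `N`. -/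
def grpCoinvKer (ρ : Representation ℂ Γ V) (N : Subgroup Γ) : Submodule ℂ V :=
  Submodule.span ℂ {w : V | ∃ n ∈ N, ∃ v : V, w = ρ n v - v}

lemma grpInv_invariant (ρ : Representation ℂ Γ V) (N : Subgroup Γ) [hN : N.Normal] :
    GRep.Invariant ρ (grpInv ρ N) := by
  intro γ v hv
  rw [mem_grpInv] at hv ⊢
  intro n hn
  have hmem : γ⁻¹ * n * γ ∈ N := by
    have := hN.conj_mem n hn γ⁻¹
    simpa using this
  have key : ρ n (ρ γ v) = ρ γ (ρ (γ⁻¹ * n * γ) v) := by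
    rw [← Module.End.mul_apply, ← map_mul, ← Module.End.mul_apply, ← map_mul]
    congr 1
    group
  rw [key, hv _ hmem]

lemma grpCoinvKer_invariant (ρ : Representation ℂ Γ V) (N : Subgroup Γ) [hN : N.Normal] :
    GRep.Invariant ρ (grpCoinvKer ρ N) := by
  intro γ v hv
  have h : grpCoinvKer ρ N ≤ Submodule.comap (ρ γ) (grpCoinvKer ρ N) := by
    refine Submodule.span_le.2 ?_
    rintro w ⟨n, hn, v', rfl⟩
    simp only [SetLike.mem_coe, Submodule.mem_comap, map_sub]
    have key : ρ γ (ρ n v') = ρ (γ * n * γ⁻¹) (ρ γ v') := by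
      rw [← Module.End.mul_apply, ← map_mul, ← Module.End.mul_apply, ← map_mul]
      congr 1
      group
    rw [key]
    exact Submodule.subset_span ⟨γ * n * γ⁻¹, hN.conj_mem n hn γ, ρ γ v', rfl⟩
  exact h hv

/-- The map induced on `N`-invariants by an equivariant map. -/
def grpInvRestrict (ρ : Representation ℂ Γ V) (σ : Representation ℂ Γ W) (N : Subgroup Γ)
    (f : V →ₗ[ℂ] W) (hf : GRep.Equivariant ρ σ f) : ↥(grpInv ρ N) →ₗ[ℂ] ↥(grpInv σ N) :=
  f.restrict (fun v hv => by
    rw [mem_grpInv] at hv ⊢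
    intro n hn
    rw [← hf n v, hv n hn])

lemma grpCoinvKer_le_comap (ρ : Representation ℂ Γ V) (σ : Representation ℂ Γ W) (N : Subgroup Γ)
    (f : V →ₗ[ℂ] W) (hf : GRep.Equivariant ρ σ f) :
    grpCoinvKer ρ N ≤ (grpCoinvKer σ N).comap f := by
  refine Submodule.span_le.2 ?_
  rintro w ⟨n, hn, v, rfl⟩
  simp only [SetLike.mem_coe, Submodule.mem_comap, map_sub]
  rw [hf]
  exact Submodule.subset_span ⟨n, hn, f v, rfl⟩

/-- The map induced on `N`-coinvariants by an equivariant map. -/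
def grpCoinvMap (ρ : Representation ℂ Γ V) (σ : Representation ℂ Γ W) (N : Subgroup Γ)
    (f : V →ₗ[ℂ] W) (hf : GRep.Equivariant ρ σ f) :
    (V ⧸ grpCoinvKer ρ N) →ₗ[ℂ] (W ⧸ grpCoinvKer σ N) :=
  Submodule.mapQ _ _ f (grpCoinvKer_le_comap ρ σ N f hf)

end Grp

/-! ### Tate L-factors of finite-dimensional `T`-modules. -/

section Lfactor

variable {K : Type*} [NontriviallyNormedField K]
variable {X : Type*} [AddCommGroup X] [Module ℂ X]

/-- The part of a `T`-module where the `χ`-twisted action is unramified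
(trivial on the norm-one units). -/
def unrPart (τ : Representation ℂ Kˣ X) (χ : Kˣ →* ℂˣ) : Submodule ℂ X where
  carrier := {x | ∀ u : Kˣ, ‖(u : K)‖ = 1 → (χ u : ℂ) • τ u x = x}
  zero_mem' := fun u _ => by simp
  add_mem' {a b} ha hb := fun u hu => by rw [map_add, smul_add, ha u hu, hb u hu]
  smul_mem' c x hx := fun u hu => by
    rw [map_smul, smul_comm, hx u hu]

lemma unrPart_stable (τ : Representation ℂ Kˣ X) (χ : Kˣ →* ℂˣ) (ϖ : Kˣ) :
    ∀ x ∈ unrPart τ χ, ((χ ϖ : ℂ) • τ ϖ) x ∈ unrPart τ χ := by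
  intro x hx u hu
  have comm : τ u (τ ϖ x) = τ ϖ (τ u x) := by
    rw [← Module.End.mul_apply, ← map_mul, mul_comm, map_mul, Module.End.mul_apply]
  calc (χ u : ℂ) • τ u (((χ ϖ : ℂ) • τ ϖ) x)
      = (χ ϖ : ℂ) • ((χ u : ℂ) • τ u (τ ϖ x)) := by
        rw [LinearMap.smul_apply, map_smul, smul_comm]
    _ = (χ ϖ : ℂ) • τ ϖ ((χ u : ℂ) • τ u x) := by rw [comm, map_smul]
    _ = ((χ ϖ : ℂ) • τ ϖ) x := by rw [hx u hu, LinearMap.smul_apply]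

/-- The twisted uniformizer action on the unramified part. -/
def twistOp (τ : Representation ℂ Kˣ X) (χ : Kˣ →* ℂˣ) (ϖ : Kˣ) :
    ↥(unrPart τ χ) →ₗ[ℂ] ↥(unrPart τ χ) :=
  LinearMap.restrict ((χ ϖ : ℂ) • τ ϖ) (unrPart_stable τ χ ϖ)

/-- The Tate `L`-factor `L(s, χ ⊗ X) = det(1 - q^{-s}·(χ·τ)(ϖ) | X^{unr,χ})⁻¹` of a
(finite-dimensional) `T`-module `X`, relative to a uniformizer `ϖ`. -/
def Lfactor (τ : Representation ℂ Kˣ X) (χ : Kˣ →* ℂˣ) (ϖ : Kˣ) (s : ℂ) : ℂ :=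
  (LinearMap.det (LinearMap.id - (‖(ϖ : K)‖ : ℂ) ^ s • twistOp τ χ ϖ))⁻¹

end Lfactor

/-! ### The concrete `TS`-modules `𝕊`, `C_c^∞(k)`, `C_b^∞(k^×)` and `𝔼[χ]`. -/

section Concrete

open Aff

variable (K : Type*) [NontriviallyNormedField K]

/-- The representation of `TS` on functions on `k^×`:
`(s_b g)(x) = ψ(bx) g(x)`, `(x_λ g)(x) = g(xλ)`. -/
def repCx (ψ : AddChar K ℂ) : Rep K (Kˣ → ℂ) where
  toFun g :=
    { toFun := fun f x => ψ (g.s * (x : K)) * f (x * g.t)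
      map_add' := fun f₁ f₂ => by funext x; simp [mul_add]
      map_smul' := fun c f => by
        funext x
        simp only [Pi.smul_apply, smul_eq_mul, RingHom.id_apply]
        ring }
  map_one' := by
    apply LinearMap.ext; intro f; funext x
    simp
  map_mul' g h := by
    apply LinearMap.ext; intro f; funext x
    show ψ ((g.s + (g.t : K) * h.s) * (x : K)) * f (x * (g.t * h.t))
        = ψ (g.s * (x : K)) * (ψ (h.s * ((x * g.t : Kˣ) : K)) * f (x * g.t * h.t))
    have harg : (g.s + (g.t : K) * h.s) * (x : K)
        = g.s * (x : K) + h.s * ((x * g.t : Kˣ) : K) := by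
      push_cast
      ring
    rw [harg, AddChar.map_add_eq_mul, ← mul_assoc x g.t h.t]
    ring

@[simp] lemma repCx_apply (ψ : AddChar K ℂ) (g : Aff K) (f : Kˣ → ℂ) (x : Kˣ) :
    repCx K ψ g f x = ψ (g.s * (x : K)) * f (x * g.t) := rfl

/-- The `χ`-twisted representation of `TS` on functions on `k`:
`(s_b g)(x) = ψ(bx) g(x)`, `(x_λ g)(x) = χ(λ) g(xλ)`.  (Take `χ = 1` for the
untwisted action on `C_c^∞(k)`; the module `𝔼[χ]` is `C_c^∞(k)` with the twisted action.) -/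
def repCc (ψ : AddChar K ℂ) (χ : Kˣ →* ℂˣ) : Rep K (K → ℂ) where
  toFun g :=
    { toFun := fun f x => (χ g.t : ℂ) * ψ (g.s * x) * f (x * (g.t : K))
      map_add' := fun f₁ f₂ => by funext x; simp [mul_add]
      map_smul' := fun c f => by
        funext x
        simp only [Pi.smul_apply, smul_eq_mul, RingHom.id_apply]
        ring }
  map_one' := by
    apply LinearMap.ext; intro f; funext x
    simp
  map_mul' g h := by
    apply LinearMap.ext; intro f; funext x
    show (χ (g.t * h.t) : ℂ) * ψ ((g.s + (g.t : K) * h.s) * x) * f (x * ((g.t * h.t : Kˣ) : K))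
        = (χ g.t : ℂ) * ψ (g.s * x) * ((χ h.t : ℂ) * ψ (h.s * (x * (g.t : K)))
            * f (x * (g.t : K) * (h.t : K)))
    have harg : (g.s + (g.t : K) * h.s) * x = g.s * x + h.s * (x * (g.t : K)) := by ring
    have harg2 : x * ((g.t * h.t : Kˣ) : K) = x * (g.t : K) * (h.t : K) := by
      push_cast
      ring
    rw [harg, harg2, AddChar.map_add_eq_mul, map_mul]
    push_cast
    ring

@[simp] lemma repCc_apply (ψ : AddChar K ℂ) (χ : Kˣ →* ℂˣ) (g : Aff K) (f : K → ℂ) (x : K) :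
    repCc K ψ χ g f x = (χ g.t : ℂ) * ψ (g.s * x) * f (x * (g.t : K)) := rfl

/-- The one-dimensional `TS`-module `ℂ_χ` on which `S` acts trivially and `x_λ` by `χ(λ)`. -/
def chiRep (χ : Kˣ →* ℂˣ) : Rep K ℂ where
  toFun g := (χ g.t : ℂ) • LinearMap.id
  map_one' := by
    apply LinearMap.ext; intro c
    simp
  map_mul' g h := by
    apply LinearMap.ext; intro c
    simp only [mul_t, map_mul, LinearMap.smul_apply, LinearMap.id_apply, Module.End.mul_apply,
      Units.val_mul, smul_eq_mul]
    ring

/-- `C_c^∞(k)`: locally constant, compactly supported functions on `k`. -/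
def CcK : Submodule ℂ (K → ℂ) where
  carrier := {f | IsLocallyConstant f ∧ HasCompactSupport f}
  zero_mem' := ⟨IsLocallyConstant.const 0, by
    rw [hasCompactSupport_def]
    simp⟩
  add_mem' {a b} ha hb := ⟨ha.1.comp₂ hb.1 (· + ·), ha.2.add hb.2⟩
  smul_mem' c f hf := by
    refine ⟨?_, hf.2.mono (Function.support_const_smul_subset c f)⟩
    exact hf.1.comp (fun z => c * z)

@[simp] lemma mem_CcK (f : K → ℂ) :
    f ∈ CcK K ↔ IsLocallyConstant f ∧ HasCompactSupport f := Iff.rfl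

/-- `𝕊 = C_c^∞(k^×)`: locally constant, compactly supported functions on `k^×`. -/
def SSx : Submodule ℂ (Kˣ → ℂ) where
  carrier := {f | IsLocallyConstant f ∧ HasCompactSupport f}
  zero_mem' := ⟨IsLocallyConstant.const 0, by
    rw [hasCompactSupport_def]
    simp⟩
  add_mem' {a b} ha hb := ⟨ha.1.comp₂ hb.1 (· + ·), ha.2.add hb.2⟩
  smul_mem' c f hf := by
    refine ⟨?_, hf.2.mono (Function.support_const_smul_subset c f)⟩
    exact hf.1.comp (fun z => c * z)

@[simp] lemma mem_SSx (f : Kˣ → ℂ) :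
    f ∈ SSx K ↔ IsLocallyConstant f ∧ HasCompactSupport f := Iff.rfl

/-- `C_b^∞(k^×)`: locally constant functions on `k^×` whose support has compact closure
in `k`. -/
def Cb : Submodule ℂ (Kˣ → ℂ) where
  carrier := {f | IsLocallyConstant f ∧
    IsCompact (closure (((↑) : Kˣ → K) '' Function.support f))}
  zero_mem' := ⟨IsLocallyConstant.const 0, by simp⟩
  add_mem' {a b} ha hb := by
    refine ⟨ha.1.comp₂ hb.1 (· + ·), ?_⟩
    refine IsCompact.of_isClosed_subset (ha.2.union hb.2) isClosed_closure ?_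
    refine closure_minimal ?_ (ha.2.isClosed.union hb.2.isClosed)
    refine (Set.image_mono (Function.support_add _ _)).trans ?_
    rw [Set.image_union]
    exact Set.union_subset_union subset_closure subset_closure
  smul_mem' c f hf := by
    refine ⟨hf.1.comp (fun z => c * z), ?_⟩
    refine IsCompact.of_isClosed_subset hf.2 isClosed_closure ?_
    refine closure_mono ?_
    exact Set.image_mono (Function.support_const_smul_subset c f)

@[simp] lemma mem_Cb (f : Kˣ → ℂ) :
    f ∈ Cb K ↔ IsLocallyConstant f ∧
      IsCompact (closure (((↑) : Kˣ → K) '' Function.support f)) := Iff.rfl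

variable {K}

lemma SSx_invariant (ψ : AddChar K ℂ) (hψlc : IsLocallyConstant (⇑ψ)) :
    GRep.Invariant (repCx K ψ) (SSx K) := by
  rintro g f hf
  rw [mem_SSx] at hf ⊢
  obtain ⟨hlc, hcs⟩ := hf
  have heq : repCx K ψ g f
      = (fun x : Kˣ => ψ (g.s * (x : K))) * (f ∘ (Homeomorph.mulRight g.t)) := rfl
  constructor
  · rw [heq]
    refine IsLocallyConstant.mul ?_ ?_
    · exact hψlc.comp_continuous (continuous_const.mul Units.continuous_val)
    · exact hlc.comp_continuous (Homeomorph.mulRight g.t).continuous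
  · rw [heq]
    exact (hcs.comp_homeomorph (Homeomorph.mulRight g.t)).mul_left

lemma CcK_invariant (ψ : AddChar K ℂ) (hψlc : IsLocallyConstant (⇑ψ)) (χ : Kˣ →* ℂˣ) :
    GRep.Invariant (repCc K ψ χ) (CcK K) := by
  rintro g f hf
  rw [mem_CcK] at hf ⊢
  obtain ⟨hlc, hcs⟩ := hf
  have hne : ((g.t : Kˣ) : K) ≠ 0 := g.t.ne_zero
  have heq : repCc K ψ χ g f
      = (fun x : K => (χ g.t : ℂ) * ψ (g.s * x)) * (f ∘ (Homeomorph.mulRight₀ (g.t : K) hne)) :=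
    rfl
  constructor
  · rw [heq]
    refine IsLocallyConstant.mul ?_ ?_
    · exact ((hψlc.comp_continuous (continuous_const.mul continuous_id)).comp
        (fun z => (χ g.t : ℂ) * z))
    · exact hlc.comp_continuous (Homeomorph.mulRight₀ (g.t : K) hne).continuous
  · rw [heq]
    exact (hcs.comp_homeomorph (Homeomorph.mulRight₀ (g.t : K) hne)).mul_left

/-- The `TS`-module `𝕊 = C_c^∞(k^×)`. -/
def SRep (ψ : AddChar K ℂ) (hψlc : IsLocallyConstant (⇑ψ)) : Rep K ↥(SSx K) :=
  GRep.sub (repCx K ψ) (SSx_invariant ψ hψlc)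

/-- The `TS`-module `𝔼[χ]`, i.e. `C_c^∞(k)` with the `χ`-twisted action. -/
def ERep (ψ : AddChar K ℂ) (hψlc : IsLocallyConstant (⇑ψ)) (χ : Kˣ →* ℂˣ) : Rep K ↥(CcK K) :=
  GRep.sub (repCc K ψ χ) (CcK_invariant ψ hψlc χ)

/-- The `TS`-module `𝕊^s`, a direct sum of `s` copies of `𝕊`. -/
def SRepPow (ψ : AddChar K ℂ) (hψlc : IsLocallyConstant (⇑ψ)) (s : ℕ) :
    Rep K (Fin s → ↥(SSx K)) where
  toFun g := LinearMap.pi fun i => (SRep ψ hψlc g).comp (LinearMap.proj i)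
  map_one' := by
    apply LinearMap.ext; intro v; funext i
    simp
  map_mul' g h := by
    apply LinearMap.ext; intro v; funext i
    simp [map_mul]

/-- The submodule `E` of `C_b^∞(k^×)` consisting of functions which are `χ`-eigenvectors
modulo `𝕊`; the quotient `E/𝕊` is the `χ`-eigenspace of `C_b^∞(k^×)/𝕊`. -/
def quotEigen (ψ : AddChar K ℂ) (χ : Kˣ →* ℂˣ) : Submodule ℂ (Kˣ → ℂ) where
  carrier := {f | f ∈ Cb K ∧ ∀ u : Kˣ, repCx K ψ (Aff.xT u) f - (χ u : ℂ) • f ∈ SSx K}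
  zero_mem' := ⟨(Cb K).zero_mem, fun u => by simpa using (SSx K).zero_mem⟩
  add_mem' {a b} ha hb := by
    refine ⟨(Cb K).add_mem ha.1 hb.1, fun u => ?_⟩
    rw [map_add, smul_add, add_sub_add_comm]
    exact (SSx K).add_mem (ha.2 u) (hb.2 u)
  smul_mem' c f hf := by
    refine ⟨(Cb K).smul_mem c hf.1, fun u => ?_⟩
    rw [map_smul, smul_comm, ← smul_sub]
    exact (SSx K).smul_mem c (hf.2 u)

/-- Evaluation at `0 ∈ k`, realizing the quotient map `𝔼[χ] → ℂ_χ` with kernel `𝕊`. -/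
def ev0 : ↥(CcK K) →ₗ[ℂ] ℂ where
  toFun f := (f : K → ℂ) 0
  map_add' f g := rfl
  map_smul' c f := rfl

end Concrete

/-! ### The diagonal torus in GL(2). -/

section GL2

variable {K : Type*} [Field K]

/-- The diagonal element `diag(a, b)` of `GL(2, K)`. -/
def diagGL (a b : Kˣ) : Matrix.GeneralLinearGroup (Fin 2) K where
  val := Matrix.diagonal ![(a : K), (b : K)]
  inv := Matrix.diagonal ![((a : K))⁻¹, ((b : K))⁻¹]
  val_inv := by
    ext i j
    fin_cases i <;> fin_cases j <;>
      simp [Matrix.mul_apply, Fin.sum_univ_two, Matrix.diagonal, Matrix.one_apply,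
        a.ne_zero, b.ne_zero]
  inv_val := by
    ext i j
    fin_cases i <;> fin_cases j <;>
      simp [Matrix.mul_apply, Fin.sum_univ_two, Matrix.diagonal, Matrix.one_apply,
        a.ne_zero, b.ne_zero]

end GL2

section Statements

open Aff

variable {K : Type*} [NontriviallyNormedField K] [IsUltrametricDist K] [ProperSpace K]

/-!
Smoothness makes every vector of a `TS`-module fixed by some `s_{nb}`, `n > 0`, for any given
`b ∈ k`, because `b` lies in a compact subgroup of `k`. Averaging over the powers of `s_b` therefore
kills `s_b v - v` while fixing all `S`-invariant vectors, and such averages commute; so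
`E(S) ∩ E^S = 0`. On a finite-dimensional smooth module the `s_b` with `b` small act trivially, and
conjugation by `T` spreads this to all of `S`; hence `X ⊆ E^S`. Finally `𝕊_S = 0`, so `E(S)`
surjects onto `𝕊^s` and is a complement of `X`.
-/

section Averaging

variable {k G V : Type*} [Field k] [AddCommGroup V] [Module k V]

/-- The mean `n⁻¹ (1 + g + ⋯ + g ^ (n - 1))` in the group algebra. If `g ^ n` fixes `v`, it acts on
`v` as averaging over the powers of `g`. For `n = 0` it is `0`. -/
def powMean (k : Type*) [Field k] [Monoid G] (g : G) (n : ℕ) : MonoidAlgebra k G :=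
  (n : k)⁻¹ • ∑ i ∈ Finset.range n, MonoidAlgebra.of k G g ^ i

lemma powMean_apply_of_apply_eq_self [CharZero k] [Monoid G] (ρ : Representation k G V) {g : G}
    {n : ℕ} (hn : n ≠ 0) {x : V} (hx : ρ g x = x) : ρ.asAlgebraHom (powMean k g n) x = x := by
  have hpow (i : ℕ) : (ρ g ^ i) x = x := by
    rw [Module.End.pow_apply]
    exact Function.iterate_fixed hx i
  have hn' : (n : k) ≠ 0 := Nat.cast_ne_zero.2 hn
  simp [powMean, hpow, ← Nat.cast_smul_eq_nsmul k, smul_smul, hn']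

lemma powMean_apply_sub_eq_zero [Monoid G] (ρ : Representation k G V) {g : G} {n : ℕ} {v : V}
    (hv : ρ (g ^ n) v = v) : ρ.asAlgebraHom (powMean k g n) (ρ g v - v) = 0 := by
  have hgeom : (∑ i ∈ Finset.range n, ρ g ^ i) (ρ g v - v) = 0 := by
    have := congr($(geom_sum_mul (ρ g) n) v)
    simpa [← map_pow, hv] using this
  simp [powMean, -map_sub, hgeom]

variable [CharZero k] [CommGroup G] (ρ : Representation k G V)

lemma exists_asAlgebraHom_apply_eq_zero (hρ : ∀ g v, ∃ n ≠ 0, ρ (g ^ n) v = v) {w : V}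
    (hw : w ∈ Representation.Coinvariants.ker ρ) :
    ∃ a : MonoidAlgebra k G, (∀ x ∈ ρ.invariants, ρ.asAlgebraHom a x = x) ∧
      ρ.asAlgebraHom a w = 0 := by
  induction hw using Submodule.span_induction with
  | mem w h =>
    obtain ⟨⟨g, v⟩, rfl⟩ := h
    obtain ⟨n, hn, hv⟩ := hρ g v
    exact ⟨powMean k g n, fun x hx => powMean_apply_of_apply_eq_self ρ hn (hx g),
      powMean_apply_sub_eq_zero ρ hv⟩
  | zero => exact ⟨1, by simp, map_zero _⟩
  | add v w _ _ hv hw =>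
    obtain ⟨a, ha, hav⟩ := hv
    obtain ⟨b, hb, hbw⟩ := hw
    refine ⟨a * b, fun x hx => by simp [ha x hx, hb x hx], ?_⟩
    have hv : ρ.asAlgebraHom (a * b) v = 0 := by rw [mul_comm]; simp [hav]
    have hw : ρ.asAlgebraHom (a * b) w = 0 := by simp [hbw]
    rw [map_add, hv, hw, add_zero]
  | smul c v _ hv =>
    obtain ⟨a, ha, hav⟩ := hv
    exact ⟨a, ha, by rw [map_smul, hav, smul_zero]⟩

lemma disjoint_invariants_coinvariantsKer (hρ : ∀ g v, ∃ n ≠ 0, ρ (g ^ n) v = v) :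
    Disjoint ρ.invariants (Representation.Coinvariants.ker ρ) := by
  refine Submodule.disjoint_def.2 fun x hx hx' => ?_
  obtain ⟨a, ha, hax⟩ := exists_asAlgebraHom_apply_eq_zero ρ hρ hx'
  rw [← ha x hx, hax]

end Averaging

section Complement

lemma exists_linearEquiv_of_isCompl_ker {R M N : Type*} [Ring R] [AddCommGroup M] [Module R M]
    [AddCommGroup N] [Module R N] {f : M →ₗ[R] N} {U : Submodule R M}
    (hsurj : Function.Surjective f) (h : IsCompl (LinearMap.ker f) U) :
    ∃ e : U ≃ₗ[R] N, ∀ u, e u = f u :=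
  ⟨(f.kerComplementEquivRange h.symm).trans (LinearEquiv.ofTop _ (LinearMap.range_eq_top.2 hsurj)),
    fun _ => rfl⟩

variable {G V W : Type*} [Monoid G] [AddCommGroup V] [Module ℂ V] [AddCommGroup W] [Module ℂ W]
  {ρ : Representation ℂ G V} {σ : Representation ℂ G W} {π : V →ₗ[ℂ] W} {U : Submodule ℂ V}

lemma iso_of_isCompl_ker (hπ : GRep.Equivariant ρ σ π) (hsurj : Function.Surjective π)
    (hU : GRep.Invariant ρ U) (h : IsCompl (LinearMap.ker π) U) : GRep.Iso (GRep.sub ρ hU) σ := by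
  obtain ⟨e, he⟩ := exists_linearEquiv_of_isCompl_ker hsurj h
  exact ⟨e, fun g u => by rw [he, he, GRep.sub_apply, hπ]⟩

lemma exists_section_of_isCompl_ker (hπ : GRep.Equivariant ρ σ π) (hsurj : Function.Surjective π)
    (hU : GRep.Invariant ρ U) (h : IsCompl (LinearMap.ker π) U) :
    ∃ r : W →ₗ[ℂ] V, GRep.Equivariant σ ρ r ∧ π.comp r = LinearMap.id := by
  obtain ⟨e, he⟩ := exists_linearEquiv_of_isCompl_ker hsurj h
  have hsymm (g : G) (w : W) : e.symm (σ g w) = GRep.sub ρ hU g (e.symm w) := by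
    rw [LinearEquiv.symm_apply_eq, he, GRep.sub_apply, hπ, ← he, e.apply_symm_apply]
  exact ⟨U.subtype.comp e.symm.toLinearMap, fun g w => congrArg U.subtype (hsymm g w),
    LinearMap.ext fun w => (he _).symm.trans (e.apply_symm_apply w)⟩

end Complement

section SAction

open Filter Topology

section Field

variable {F V W : Type*} [Field F] [AddCommGroup V] [Module ℂ V] [AddCommGroup W] [Module ℂ W]

/-- `S ≅ (k, +)` as a subgroup of `TS`. -/
def sSHom : Multiplicative F →* Aff F where
  toFun b := sS b.toAdd
  map_one' := rfl
  map_mul' b c := by ext <;> simp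

lemma sInv_eq_invariants (ρ : Rep F V) : sInv ρ = Representation.invariants (ρ.comp sSHom) := rfl

lemma sCoinvKer_eq_coinvariantsKer (ρ : Rep F V) :
    sCoinvKer ρ = Representation.Coinvariants.ker (ρ.comp sSHom) := by
  refine congrArg (Submodule.span ℂ) (Set.ext fun w => ?_)
  constructor
  · rintro ⟨b, v, rfl⟩
    exact ⟨(.ofAdd b, v), rfl⟩
  · rintro ⟨⟨b, v⟩, rfl⟩
    exact ⟨b.toAdd, v, rfl⟩

lemma map_sCoinvKer_of_surjective {ρ : Rep F V} {σ : Rep F W} {f : V →ₗ[ℂ] W}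
    (hf : GRep.Equivariant ρ σ f) (hsurj : Function.Surjective f) :
    (sCoinvKer ρ).map f = sCoinvKer σ := by
  refine le_antisymm (Submodule.map_le_iff_le_comap.2 (sCoinvKer_le_comap ρ σ f hf)) ?_
  refine Submodule.span_le.2 ?_
  rintro _ ⟨b, w, rfl⟩
  obtain ⟨v, rfl⟩ := hsurj w
  exact ⟨ρ (sS b) v - v, Submodule.subset_span ⟨b, v, rfl⟩, by rw [map_sub, hf]⟩

lemma codisjoint_ker_sCoinvKer {ρ : Rep F V} {σ : Rep F W} {π : V →ₗ[ℂ] W}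
    (hπ : GRep.Equivariant ρ σ π) (hsurj : Function.Surjective π) (hσ : sCoinvKer σ = ⊤) :
    Codisjoint (LinearMap.ker π) (sCoinvKer ρ) := by
  rw [codisjoint_iff, sup_comm, ← Submodule.comap_map_eq, map_sCoinvKer_of_surjective hπ hsurj, hσ,
    Submodule.comap_top]

lemma sS_mul_apply_eq_self_iff (ρ : Rep F V) (u : Fˣ) (b : F) (v : V) :
    ρ (sS (u * b)) (ρ (xT u) v) = ρ (xT u) v ↔ ρ (sS b) v = v := by
  have hconj : ρ (sS (u * b)) (ρ (xT u) v) = ρ (xT u) (ρ (sS b) v) := by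
    simp only [← Module.End.mul_apply, ← map_mul, mul_sS, xT_t]
  rw [hconj, (ρ.apply_bijective (xT u)).injective.eq_iff]

end Field

variable {F V : Type*} [NontriviallyNormedField F] [AddCommGroup V] [Module ℂ V]

lemma continuous_sS : Continuous (sS : F → Aff F) :=
  continuous_induced_rng.2 (continuous_const.prodMk continuous_id)

lemma eventually_sS_apply_eq_self {ρ : Rep F V} (hρ : IsSmoothRep ρ) (v : V) :
    ∀ᶠ b in 𝓝 (0 : F), ρ (sS b) v = v :=
  ((hρ v).preimage continuous_sS).mem_nhds congr($(map_one ρ) v)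

lemma eventually_sS_eq_one [Module.Finite ℂ V] {ρ : Rep F V} (hρ : IsSmoothRep ρ) :
    ∀ᶠ b in 𝓝 (0 : F), ρ (sS b) = 1 := by
  obtain ⟨B, hB⟩ := Module.Finite.fg_top (R := ℂ) (M := V)
  have hfix : ∀ᶠ b in 𝓝 (0 : F), ∀ v ∈ B, ρ (sS b) v = v :=
    B.eventually_all.2 fun v _ => eventually_sS_apply_eq_self hρ v
  filter_upwards [hfix] with b hb
  exact LinearMap.ext_on hB hb

theorem sInv_eq_top_of_finite [Module.Finite ℂ V] {ρ : Rep F V} (hρ : IsSmoothRep ρ) :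
    sInv ρ = ⊤ := by
  refine Submodule.eq_top_iff'.2 fun v b => ?_
  have hscale : Tendsto (fun l : F => l * b) (𝓝[≠] 0) (𝓝 0) :=
    (Continuous.tendsto' (by fun_prop) 0 0 (zero_mul b)).mono_left nhdsWithin_le_nhds
  obtain ⟨l, hl, hl0 : l ≠ 0⟩ := ((hscale.eventually (eventually_sS_eq_one hρ)).and
    eventually_mem_nhdsWithin).exists
  rw [← sS_mul_apply_eq_self_iff ρ (Units.mk0 l hl0), Units.val_mk0, hl, Module.End.one_apply]

lemma range_le_sInv {X : Type*} [AddCommGroup X] [Module ℂ X] [Module.Finite ℂ X] {ρX : Rep F X}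
    (hρX : IsSmoothRep ρX) {ρ : Rep F V} {ι : X →ₗ[ℂ] V} (hι : GRep.Equivariant ρX ρ ι) :
    LinearMap.range ι ≤ sInv ρ := by
  rintro _ ⟨x, rfl⟩ b
  have hx : x ∈ sInv ρX := sInv_eq_top_of_finite hρX ▸ Submodule.mem_top
  rw [← hι, hx b]

end SAction

section Ultrametric

open Filter Topology

lemma exists_nsmul_mem_of_mem_nhds_zero {A : Type*} [SeminormedAddCommGroup A]
    [IsUltrametricDist A] [ProperSpace A] (a : A) {U : Set A} (hU : U ∈ 𝓝 0) :
    ∃ n ≠ 0, n • a ∈ U := by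
  have hr : 0 < ‖a‖ + 1 := by positivity
  let B : AddSubgroup A := IsUltrametricDist.closedBall_openAddSubgroup A hr
  have : CompactSpace B := isCompact_iff_compactSpace.1 (isCompact_closedBall 0 (‖a‖ + 1))
  have ha : a ∈ B := mem_closedBall_zero_iff.2 (by linarith)
  have hfreq : ∃ᶠ n : ℕ in atTop, n • (⟨a, ha⟩ : B) ∈ ((↑) : B → A) ⁻¹' U :=
    (mapClusterPt_zero_atTop_nsmul _).frequently (continuous_subtype_val.continuousAt hU)
  obtain ⟨n, hn, hn0⟩ := (hfreq.and_eventually (eventually_ne_atTop 0)).exists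
  exact ⟨n, hn0, hn⟩

theorem disjoint_sInv_sCoinvKer {E : Type*} [AddCommGroup E] [Module ℂ E] {ρ : Rep K E}
    (hρ : IsSmoothRep ρ) : Disjoint (sInv ρ) (sCoinvKer ρ) := by
  rw [sInv_eq_invariants, sCoinvKer_eq_coinvariantsKer]
  exact disjoint_invariants_coinvariantsKer (ρ.comp sSHom) fun b v =>
    exists_nsmul_mem_of_mem_nhds_zero b.toAdd (eventually_sS_apply_eq_self hρ v)

end Ultrametric

section SchwartzSpace

open Topology

variable {F : Type*} [NontriviallyNormedField F] {ψ : AddChar F ℂ}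

lemma isLocallyConstant_addChar_mul_units (hψlc : IsLocallyConstant ψ) (b : F) :
    IsLocallyConstant fun x : Fˣ => ψ (b * x) :=
  hψlc.comp_continuous (continuous_const.mul Units.continuous_val)

lemma indicator_mem_SSx {U : Set Fˣ} (hU : IsClopen U) {f : Fˣ → ℂ} (hf : f ∈ SSx F) :
    U.indicator f ∈ SSx F :=
  ⟨(LocallyConstant.indicator ⟨f, hf.1⟩ hU).isLocallyConstant,
    hf.2.mono (Set.support_indicator.trans_subset Set.inter_subset_right)⟩

lemma mem_sCoinvKer_SRep_of_addChar_ne_one (hψlc : IsLocallyConstant ψ) {f : SSx F} (b : F)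
    (hf : ∀ x, (f : Fˣ → ℂ) x ≠ 0 → ψ (b * x) ≠ 1) : f ∈ sCoinvKer (SRep ψ hψlc) := by
  let g : SSx F := ⟨fun x => (f : Fˣ → ℂ) x / (ψ (b * x) - 1),
    f.2.1.comp₂ (isLocallyConstant_addChar_mul_units hψlc b) fun z w => z / (w - 1),
    f.2.2.mono fun x hx => (div_ne_zero_iff.1 hx).1⟩
  refine Submodule.subset_span ⟨b, g, Subtype.ext (funext fun x => ?_)⟩
  have hval : (SRep ψ hψlc (sS b) g - g : SSx F).1 x =
      (ψ (b * x) - 1) * ((f : Fˣ → ℂ) x / (ψ (b * x) - 1)) := by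
    simp [SRep, g, sub_mul]
  rw [hval]
  by_cases hx : (f : Fˣ → ℂ) x = 0
  · simp [hx]
  · rw [mul_div_cancel₀ _ (sub_ne_zero.2 (hf x hx))]

lemma mem_sCoinvKer_SRep_of_support_subset_union (hψlc : IsLocallyConstant ψ) {U V : Set Fˣ}
    (hU : IsClopen U)
    (hfU : ∀ f : SSx F, Function.support f.1 ⊆ U → f ∈ sCoinvKer (SRep ψ hψlc))
    (hfV : ∀ f : SSx F, Function.support f.1 ⊆ V → f ∈ sCoinvKer (SRep ψ hψlc))
    {f : SSx F} (hf : Function.support f.1 ⊆ U ∪ V) : f ∈ sCoinvKer (SRep ψ hψlc) := by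
  let fU : SSx F := ⟨U.indicator f.1, indicator_mem_SSx hU f.2⟩
  let fV : SSx F := ⟨Uᶜ.indicator f.1, indicator_mem_SSx hU.compl f.2⟩
  have hadd : fU + fV = f := Subtype.ext (Set.indicator_self_add_compl U f.1)
  have hsuppU : Function.support fU.1 ⊆ U := Set.support_indicator_subset
  have hsuppV : Function.support fV.1 ⊆ V := by
    rw [Set.support_indicator]
    exact fun x hx => (hf hx.2).resolve_left hx.1
  rw [← hadd]
  exact Submodule.add_mem _ (hfU fU hsuppU) (hfV fV hsuppV)

theorem sCoinvKer_SRep_eq_top (hψlc : IsLocallyConstant ψ) (hψne : ψ ≠ 1) :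
    sCoinvKer (SRep ψ hψlc) = ⊤ := by
  obtain ⟨c, hc⟩ := AddChar.ne_one_iff.1 hψne
  refine Submodule.eq_top_iff'.2 fun f => ?_
  obtain ⟨U, -, hfU, hU⟩ : ∃ U, IsClopen U ∧ tsupport f.1 ⊆ U ∧
      ∀ g : SSx F, Function.support g.1 ⊆ U → g ∈ sCoinvKer (SRep ψ hψlc) := by
    refine IsCompact.induction_on (p := fun C => ∃ U, IsClopen U ∧ C ⊆ U ∧
      ∀ g : SSx F, Function.support g.1 ⊆ U → g ∈ sCoinvKer (SRep ψ hψlc)) f.2.2 ?_ ?_ ?_ ?_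
    · refine ⟨∅, isClopen_empty, subset_rfl, fun g hg => ?_⟩
      have hg0 : g = 0 := Subtype.ext (Function.support_eq_empty_iff.1 (Set.subset_empty_iff.1 hg))
      exact hg0 ▸ Submodule.zero_mem _
    · rintro C D hCD ⟨U, hU, hDU, h⟩
      exact ⟨U, hU, hCD.trans hDU, h⟩
    · rintro C D ⟨U, hU, hCU, hfU⟩ ⟨V, hV, hDV, hfV⟩
      exact ⟨U ∪ V, hU.union hV, Set.union_subset_union hCU hDV, fun g hg =>
        mem_sCoinvKer_SRep_of_support_subset_union hψlc hU hfU hfV hg⟩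
    · intro x _
      let U : Set Fˣ := {y | ψ (c * (x⁻¹ : Fˣ) * y) ≠ 1}
      have hU : IsClopen U :=
        (isLocallyConstant_addChar_mul_units hψlc (c * (x⁻¹ : Fˣ))).isClopen_fiber 1 |>.compl
      have hxU : x ∈ U := by simpa [U] using hc
      exact ⟨U, mem_nhdsWithin_of_mem_nhds (hU.isOpen.mem_nhds hxU), U, hU, subset_rfl, fun g hg =>
        mem_sCoinvKer_SRep_of_addChar_ne_one hψlc _ fun y hy => hg hy⟩
  exact hU f ((subset_tsupport _).trans hfU)

lemma sCoinvKer_SRepPow_eq_top {hψlc : IsLocallyConstant ψ} (h : sCoinvKer (SRep ψ hψlc) = ⊤)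
    (s : ℕ) : sCoinvKer (SRepPow ψ hψlc s) = ⊤ := by
  have hsingle (i : Fin s) : GRep.Equivariant (SRep ψ hψlc) (SRepPow ψ hψlc s)
      (LinearMap.single ℂ (fun _ => SSx F) i) := fun g v => funext fun j =>
    (Pi.apply_single (fun _ => SRep ψ hψlc g) (fun _ => map_zero _) i v j).symm
  refine Submodule.eq_top_iff'.2 fun f => ?_
  rw [← LinearMap.sum_single_apply (fun _ => SSx F) f]
  exact Submodule.sum_mem _ fun i _ => sCoinvKer_le_comap _ _ _ (hsingle i) (h ▸ Submodule.mem_top)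

end SchwartzSpace

theorem statement6_general {E W : Type*} [AddCommGroup E] [Module ℂ E] [AddCommGroup W] [Module ℂ W]
    {ρE : Rep K E} (hρE : IsSmoothRep ρE) {ρW : Rep K W} (hρW : sCoinvKer ρW = ⊤)
    {π : E →ₗ[ℂ] W} (hπ : GRep.Equivariant ρE ρW π) (hπsurj : Function.Surjective π)
    (hker : LinearMap.ker π ≤ sInv ρE) :
    (∃ σ : W →ₗ[ℂ] E, GRep.Equivariant ρW ρE σ ∧ π.comp σ = LinearMap.id) ∧
    IsCompl (LinearMap.ker π) (sCoinvKer ρE) ∧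
    GRep.Iso (GRep.sub ρE (sCoinvKer_invariant ρE)) ρW := by
  have hcompl : IsCompl (LinearMap.ker π) (sCoinvKer ρE) :=
    ⟨(disjoint_sInv_sCoinvKer hρE).mono_left hker, codisjoint_ker_sCoinvKer hπ hπsurj hρW⟩
  exact ⟨exists_section_of_isCompl_ker hπ hπsurj (sCoinvKer_invariant ρE) hcompl, hcompl,
    iso_of_isCompl_ker hπ hπsurj (sCoinvKer_invariant ρE) hcompl⟩

theorem statement6
    (hchar : (2 : K) ≠ 0)
    (ψ : AddChar K ℂ) (hψlc : IsLocallyConstant (⇑ψ)) (hψne : ψ ≠ 1)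
    {X E : Type*} [AddCommGroup X] [Module ℂ X] [Module.Finite ℂ X]
    [AddCommGroup E] [Module ℂ E]
    (ρX : Rep K X) (hρX : IsSmoothRep ρX)
    (ρE : Rep K E) (hρE : IsSmoothRep ρE)
    (s : ℕ)
    (ι : X →ₗ[ℂ] E) (hι : GRep.Equivariant ρX ρE ι) (hιinj : Function.Injective ι)
    (π : E →ₗ[ℂ] (Fin s → ↥(SSx K))) (hπ : GRep.Equivariant ρE (SRepPow ψ hψlc s) π)
    (hπsurj : Function.Surjective π) (hexact : LinearMap.ker π = LinearMap.range ι) :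
    (∃ σ : (Fin s → ↥(SSx K)) →ₗ[ℂ] E,
      GRep.Equivariant (SRepPow ψ hψlc s) ρE σ ∧ π.comp σ = LinearMap.id) ∧
    IsCompl (LinearMap.range ι) (sCoinvKer ρE) ∧
    GRep.Iso (GRep.sub ρE (sCoinvKer_invariant ρE)) (SRepPow ψ hψlc s) := by
  have hW := sCoinvKer_SRepPow_eq_top (sCoinvKer_SRep_eq_top hψlc hψne) s
  exact hexact ▸ statement6_general hρE hW hπ hπsurj (hexact ▸ range_le_sInv hρX hι)

end Statements

end PSW
end
end

section
/- For every cyclic finite-dimensional smooth T-module X there exists a unique TS-submodule M of C_b^∞(k^×) of finite length and degree one with S-coinvariants π_0(M) ≅ X as T-modules. -/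
noncomputable section

open scoped Classical

namespace PSW

section Statements

open Aff

variable {K : Type*} [NontriviallyNormedField K] [IsUltrametricDist K] [ProperSpace K]

/-! On `C_b^∞(kˣ)` the kernel of the map taking a function to its germ at `0` is `𝕊`. A nonzero
`TS`-submodule `M` is stable under multiplication by the characters `y ↦ ψ (b * y)`, and hence
(Stone–Weierstrass for locally constant functions on compact sets) by every locally constant
function on `k`, so it contains `𝕊`. As `S` acts trivially on germs, the coinvariants of `M` are
its space of germs, and `M` is the preimage of that space in `C_b^∞(kˣ)`.

Existence and uniqueness of `M` thus say that `X` has exactly one image under `T`-embeddings into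
germs of locally constant functions. Lift such an embedding to a linear map `J` into functions. For
each `u`, the functional `x ↦ J (y⁻¹ • x) y` is unchanged when `y` is replaced by `y * u`, for `y`
near `0`; by Baire the neighbourhood serves all `u` in a compact generating set of `kˣ`, so the
functional does not depend on `y` near `0`. Calling it `l`, the embedding is the matrix coefficient
map `x ↦ (y ↦ l (y • x))`. For cyclic `X` some `l` generates the dual of `X`, and by commutativity
of `T` any two generators give the same image. -/

open Filter Topology

section StoneWeierstrass

variable {Y F : Type*}

lemma exists_finite_subset_separating [TopologicalSpace Y] {S : Set (Y → F)}
    (hS : ∀ a ∈ S, IsLocallyConstant a) {B : Set Y} (hB : IsCompact B)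
    (hsep : ∀ x ∈ B, ∀ y ∈ B, x ≠ y → ∃ a ∈ S, a x ≠ a y)
    {φ : Y → F} (hφ : IsLocallyConstant φ) :
    ∃ t ⊆ S, t.Finite ∧ ∀ x ∈ B, ∀ y ∈ B, φ x ≠ φ y → ∃ a ∈ t, a x ≠ a y := by
  have isClopen_ne {a : Y → F} (ha : IsLocallyConstant a) :
      IsClopen {p : Y × Y | a p.1 ≠ a p.2} := by
    simpa using ((ha.comp_continuous continuous_fst).comp₂ (ha.comp_continuous continuous_snd)
      (· ≠ ·)).isClopen_fiber True
  have hcompact : IsCompact (B ×ˢ B ∩ {p | φ p.1 ≠ φ p.2}) :=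
    (hB.prod hB).inter_right (isClopen_ne hφ).1
  obtain ⟨t, htS, ht, hcover⟩ := hcompact.elim_finite_subcover_image
    (fun a ha => (isClopen_ne (hS a ha)).2) fun p ⟨⟨hp₁, hp₂⟩, hp⟩ => by
      simpa using hsep p.1 hp₁ p.2 hp₂ fun h => hp (congrArg φ h)
  exact ⟨t, htS, ht, fun x hx y hy hxy => by simpa using @hcover (x, y) ⟨⟨hx, hy⟩, hxy⟩⟩

lemma exists_mem_span_separating [Field F] [Infinite F] {t : Set (Y → F)} (ht : t.Finite)
    {B : Set Y} (hB : ∀ a ∈ t, (a '' B).Finite) :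
    ∃ a ∈ Submodule.span F t, ∀ x ∈ B, ∀ y ∈ B, (∃ b ∈ t, b x ≠ b y) → a x ≠ a y := by
  have := ht.fintype
  let v : Y → (t → F) := fun x b => b.1 x
  have hv : (v '' B).Finite :=
    (Set.Finite.pi' fun b : t => hB b b.2).subset <| by
      rintro _ ⟨x, hx, rfl⟩ b
      exact ⟨x, hx, rfl⟩
  let D : Set (t → F) := Set.image2 (· - ·) (v '' B) (v '' B) \ {0}
  have : Finite D := ((hv.image2 _ hv).sdiff).to_subtype
  obtain ⟨f, hf⟩ := Module.exists_dual_forall_apply_ne_zero (K := F) (fun d : D => d.1)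
    fun d => d.2.2
  refine ⟨∑ b : t, f (fun c => if b = c then 1 else 0) • b.1, Submodule.sum_mem _ fun b _ =>
    Submodule.smul_mem _ _ (Submodule.subset_span b.2), fun x hx y hy ⟨b, hbt, hb⟩ hxy => ?_⟩
  have apply_eq (z : Y) : (∑ b : t, f (fun c => if b = c then 1 else 0) • b.1) z = f (v z) := by
    simp only [f.pi_apply_eq_sum_univ (v z), Finset.sum_apply, Pi.smul_apply, smul_eq_mul, v,
      mul_comm]
  refine hf ⟨v x - v y, Set.mem_image2_of_mem ⟨x, hx, rfl⟩ ⟨y, hy, rfl⟩, fun h => hb ?_⟩ ?_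
  · exact sub_eq_zero.1 (congrFun h ⟨b, hbt⟩)
  · rw [map_sub, ← apply_eq, ← apply_eq, hxy, sub_self]

lemma exists_polynomial_aeval_eqOn [Field F] {B : Set Y} {a φ : Y → F} (ha : (a '' B).Finite)
    (hφ : ∀ x ∈ B, ∀ y ∈ B, a x = a y → φ x = φ y) :
    ∃ p : Polynomial F, Set.EqOn (Polynomial.aeval a p) φ B := by
  have hfac : (B.domRestrict φ).FactorsThrough (B.domRestrict a) := fun x y => hφ x x.2 y y.2
  let r : F → F := Function.extend (B.domRestrict a) (B.domRestrict φ) 0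
  refine ⟨Lagrange.interpolate ha.toFinset id r, fun x hx => ?_⟩
  calc Polynomial.aeval a _ x = Polynomial.eval (a x) (Lagrange.interpolate ha.toFinset id r) := by
        rw [Polynomial.aeval_fn_apply, Polynomial.coe_aeval_eq_eval]
    _ = r (a x) := Lagrange.eval_interpolate_at_node (v := id) r Function.injective_id.injOn
        (ha.mem_toFinset.2 ⟨x, hx, rfl⟩)
    _ = φ x := hfac.extend_apply 0 ⟨x, hx⟩

theorem exists_mem_adjoin_eqOn [TopologicalSpace Y] [Field F] [Infinite F] {S : Set (Y → F)}
    (hS : ∀ a ∈ S, IsLocallyConstant a) {B : Set Y} (hB : IsCompact B)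
    (hsep : ∀ x ∈ B, ∀ y ∈ B, x ≠ y → ∃ a ∈ S, a x ≠ a y)
    {φ : Y → F} (hφ : IsLocallyConstant φ) :
    ∃ a ∈ Algebra.adjoin F S, Set.EqOn a φ B := by
  have finite_image {a : Y → F} (ha : IsLocallyConstant a) : (a '' B).Finite := by
    have := isCompact_iff_compactSpace.1 hB
    simpa [Set.range_comp] using
      (ha.comp_continuous (continuous_subtype_val (p := (· ∈ B)))).range_finite
  obtain ⟨t, htS, ht, hsep_t⟩ := exists_finite_subset_separating hS hB hsep hφ
  obtain ⟨a, hat, hsep_a⟩ :=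
    exists_mem_span_separating ht fun b hb => finite_image (hS b (htS hb))
  have ha : IsLocallyConstant a := by
    have hrange : Submodule.span F t ≤ LinearMap.range (LocallyConstant.coeFnₗ F) :=
      Submodule.span_le.2 fun b hb => ⟨⟨b, hS b (htS hb)⟩, rfl⟩
    obtain ⟨a', rfl⟩ := hrange hat
    exact a'.isLocallyConstant
  obtain ⟨p, hp⟩ := exists_polynomial_aeval_eqOn (finite_image ha) fun x hx y hy hxy => by
    by_contra hne
    exact hsep_a x hx y hy (hsep_t x hx y hy hne) hxy
  have haS : a ∈ Algebra.adjoin F S :=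
    Algebra.span_le_adjoin F S (Submodule.span_mono htS hat)
  exact ⟨Polynomial.aeval a p, Algebra.adjoin_le (Set.singleton_subset_iff.2 haS)
    (Polynomial.aeval_mem_adjoin_singleton F a), hp⟩

end StoneWeierstrass

section Germs

variable {k : Type*} [NormedField k]

variable (k) in
/-- The trace on `kˣ` of the neighbourhoods of `0` in `k`. -/
def atZero : Filter kˣ := comap (↑) (𝓝 (0 : k))

lemma eventually_atZero {p : kˣ → Prop} :
    (∀ᶠ y in atZero k, p y) ↔ ∃ a > 0, ∀ y : kˣ, ‖(y : k)‖ ≤ a → p y := by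
  simpa [atZero] using
    ((Metric.nhds_basis_closedBall (x := (0 : k))).comap ((↑) : kˣ → k)).eventually_iff (q := p)

lemma tendsto_mul_right_atZero (u : kˣ) : Tendsto (· * u) (atZero k) (atZero k) := by
  refine tendsto_comap_iff.2 ?_
  have h : Tendsto (fun x : k => x * u) (𝓝 0) (𝓝 0) := by
    simpa using (tendsto_id (x := 𝓝 (0 : k))).mul_const (u : k)
  exact (h.comp tendsto_comap).congr fun y => by simp

lemma eventually_addChar_mul_atZero {ψ : AddChar k ℂ} (hψ : IsLocallyConstant ψ) (b : k) :
    ∀ᶠ y : kˣ in atZero k, ψ (b * y) = 1 := by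
  have h : IsLocallyConstant fun x => ψ (b * x) := hψ.comp_continuous (continuous_const_mul b)
  exact tendsto_comap.eventually ((h.eventually_eq 0).mono fun x hx => by simpa using hx)

variable (k) in
/-- The germ at `0` of a function on `kˣ`. -/
def germ : (kˣ → ℂ) →ₗ[ℂ] Germ (atZero k) ℂ where
  toFun f := f
  map_add' _ _ := rfl
  map_smul' _ _ := rfl

lemma germ_eq_iff {f g : kˣ → ℂ} : germ k f = germ k g ↔ f =ᶠ[atZero k] g := Germ.coe_eq

lemma germ_eq_zero_iff {f : kˣ → ℂ} : germ k f = 0 ↔ f =ᶠ[atZero k] 0 := Germ.coe_eq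

variable (k) in
/-- The action of `T ≅ kˣ` on germs at `0` by translation of the variable. -/
def germRep : Representation ℂ kˣ (Germ (atZero k) ℂ) where
  toFun u :=
    { toFun := fun φ => φ.compTendsto (· * u) (tendsto_mul_right_atZero u)
      map_add' := fun φ φ' => Germ.inductionOn₂ φ φ' fun _ _ => rfl
      map_smul' := fun _ φ => Germ.inductionOn φ fun _ => rfl }
  map_one' := LinearMap.ext fun φ => Germ.inductionOn φ fun f =>
    congrArg (germ k) (funext fun y => congrArg f (mul_one y))
  map_mul' u v := LinearMap.ext fun φ => Germ.inductionOn φ fun f =>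
    congrArg (germ k) (funext fun y => congrArg f (mul_assoc y u v).symm)

lemma germRep_germ (u : kˣ) (f : kˣ → ℂ) :
    germRep k u (germ k f) = germ k fun y => f (y * u) := rfl

end Germs

section GermsAndCb

variable {k : Type*} [NontriviallyNormedField k]

instance atZero_neBot : (atZero k).NeBot := by
  refine comap_neBot_iff_frequently.2 ?_
  exact (frequently_mem_iff_neBot.2 (NormedField.nhdsNE_neBot (0 : k))).mono fun x hx =>
    ⟨Units.mk0 x hx, rfl⟩

lemma germ_repCx {ψ : AddChar k ℂ} (hψ : IsLocallyConstant ψ) (g : Aff k) (f : kˣ → ℂ) :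
    germ k (repCx k ψ g f) = germRep k g.t (germ k f) := by
  rw [germRep_germ, germ_eq_iff]
  filter_upwards [eventually_addChar_mul_atZero hψ g.s] with y hy
  rw [repCx_apply, hy, one_mul]

lemma isLocallyConstant_repCx {ψ : AddChar k ℂ} (hψ : IsLocallyConstant ψ) (g : Aff k)
    {f : kˣ → ℂ} (hf : IsLocallyConstant f) : IsLocallyConstant (repCx k ψ g f) :=
  (hψ.comp_continuous (continuous_const.mul Units.continuous_val)).mul
    (hf.comp_continuous (continuous_mul_const g.t))

section Proper

variable [ProperSpace k]

lemma mem_Cb_iff_norm_le {f : kˣ → ℂ} :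
    f ∈ Cb k ↔ IsLocallyConstant f ∧ ∃ R, ∀ y, f y ≠ 0 → ‖(y : k)‖ ≤ R := by
  rw [mem_Cb]
  refine and_congr_right fun _ => ?_
  calc IsCompact (closure ((↑) '' Function.support f : Set k))
      ↔ Bornology.IsBounded ((↑) '' Function.support f : Set k) :=
        ⟨fun h => h.isBounded.subset subset_closure, fun h => h.isCompact_closure⟩
    _ ↔ _ := by simp only [isBounded_iff_forall_norm_le, Set.forall_mem_image,
        Function.mem_support]

lemma Cb_invariant {ψ : AddChar k ℂ} (hψ : IsLocallyConstant ψ) :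
    GRep.Invariant (repCx k ψ) (Cb k) := by
  intro g f hf
  obtain ⟨hlc, R, hR⟩ := mem_Cb_iff_norm_le.1 hf
  refine mem_Cb_iff_norm_le.2 ⟨isLocallyConstant_repCx hψ g hlc, R / ‖(g.t : k)‖, fun y hy => ?_⟩
  rw [le_div_iff₀ (norm_pos_iff.2 g.t.ne_zero), ← norm_mul]
  exact hR (y * g.t) (right_ne_zero_of_mul hy)

lemma isCompact_annulus {a : ℝ} (ha : 0 < a) (R : ℝ) :
    IsCompact {y : kˣ | a ≤ ‖(y : k)‖ ∧ ‖(y : k)‖ ≤ R} := by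
  have hclosed : IsClosed {x : k | a ≤ ‖x‖} := isClosed_le continuous_const continuous_norm
  convert Units.isOpenEmbedding_val.isInducing.isCompact_preimage'
    ((isCompact_closedBall (0 : k) R).inter_left hclosed) ?_ using 1
  · ext y; simp
  · rintro x ⟨hx, -⟩
    exact ⟨Units.mk0 x (norm_pos_iff.1 (ha.trans_le hx)), rfl⟩

lemma mem_SSx_iff_germ_eq_zero {f : kˣ → ℂ} : f ∈ SSx k ↔ f ∈ Cb k ∧ germ k f = 0 := by
  rw [mem_SSx, mem_Cb, and_assoc, germ_eq_zero_iff]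
  refine and_congr_right fun hlc => ⟨fun hf => ?_, fun ⟨hf, hf₀⟩ => ?_⟩
  · have hK : IsCompact ((↑) '' tsupport f : Set k) := hf.image Units.continuous_val
    refine ⟨hK.closure_of_subset (Set.image_mono (subset_tsupport f)), ?_⟩
    have h₀ : ((↑) '' tsupport f : Set k)ᶜ ∈ 𝓝 0 :=
      hK.isClosed.isOpen_compl.mem_nhds fun ⟨y, _, hy⟩ => y.ne_zero hy
    filter_upwards [preimage_mem_comap h₀] with y hy
    exact image_eq_zero_of_notMem_tsupport fun hy' => hy ⟨y, hy', rfl⟩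
  · obtain ⟨a, ha, haf⟩ := eventually_atZero.1 hf₀
    obtain ⟨R, hR⟩ := (mem_Cb_iff_norm_le.1 ⟨hlc, hf⟩).2
    refine HasCompactSupport.of_support_subset_isCompact (isCompact_annulus ha R) fun y hy => ?_
    exact ⟨(lt_of_not_ge fun hya => hy (haf y hya)).le, hR y hy⟩

end Proper

lemma exists_mem_Cb_germ_eq [IsUltrametricDist k] [ProperSpace k] {f : kˣ → ℂ}
    (hf : IsLocallyConstant f) : ∃ g ∈ Cb k, germ k g = germ k f := by
  have hU : IsClopen {y : kˣ | ‖(y : k)‖ ≤ 1} := by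
    simpa [Set.preimage] using (IsUltrametricDist.isClopen_closedBall (0 : k) one_ne_zero).preimage
      Units.continuous_val
  let g : kˣ → ℂ := Set.indicator {y | ‖(y : k)‖ ≤ 1} f
  have hg : IsLocallyConstant g := (LocallyConstant.indicator ⟨f, hf⟩ hU).isLocallyConstant
  refine ⟨g, mem_Cb_iff_norm_le.2 ⟨hg, 1, fun y => Set.mem_of_indicator_ne_zero⟩,
    germ_eq_iff.2 (eventually_atZero.2 ⟨1, one_pos, fun y hy => ?_⟩)⟩
  exact Set.indicator_of_mem (s := {y : kˣ | ‖(y : k)‖ ≤ 1}) hy f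

end GermsAndCb

section NonvanishingSum

variable {Y : Type*} [TopologicalSpace Y]

lemma exists_sum_mul_eq_of_hasCompactSupport {N : Set (Y → ℂ)}
    (hN : ∀ g ∈ N, IsLocallyConstant g) (hne : ∀ y, ∃ g ∈ N, g y ≠ 0)
    {f : Y → ℂ} (hf : IsLocallyConstant f) (hfc : HasCompactSupport f) :
    ∃ (t : Finset (Y → ℂ)) (h : (Y → ℂ) → Y → ℂ), ↑t ⊆ N ∧
      (∀ g ∈ t, IsLocallyConstant (h g) ∧ HasCompactSupport (h g)) ∧ f = ∑ g ∈ t, h g * g := by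
  obtain ⟨t', htN, ht', hcover⟩ := IsCompact.elim_finite_subcover_image (b := N)
    (c := fun g => {y | g y ≠ 0}) hfc (fun g hg => hN g hg {0}ᶜ) fun y _ => by
      simpa using hne y
  lift t' to Finset (Y → ℂ) using ht' with t
  let G : Y → ℝ := fun y => ∑ g ∈ t, Complex.normSq (g y)
  have hG_lc : IsLocallyConstant G := by
    have : G = ∑ g ∈ t, Complex.normSq ∘ g := by ext y; simp [G]
    rw [this]
    exact Finset.sum_induction _ IsLocallyConstant (fun _ _ hg hg' => hg.add hg') .zero fun g hg =>
      (hN g (htN hg)).comp _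
  have hG_ne {y : Y} (hy : f y ≠ 0) : G y ≠ 0 := by
    obtain ⟨g, hg, hgy⟩ : ∃ g ∈ t, g y ≠ 0 := by simpa using hcover (subset_tsupport f hy)
    exact (Finset.sum_pos' (fun g _ => Complex.normSq_nonneg (g y))
      ⟨g, hg, Complex.normSq_pos.2 hgy⟩).ne'
  refine ⟨t, fun g => f * fun y => starRingEnd ℂ (g y) / G y, htN, fun g hg =>
    ⟨hf.mul ((hN g (htN hg)).comp₂ hG_lc fun z r => starRingEnd ℂ z / r), hfc.mul_right⟩, ?_⟩
  ext y
  by_cases hy : f y = 0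
  · simp [hy]
  calc f y = f y * ((G y : ℂ) / G y) := by
        rw [div_self (Complex.ofReal_ne_zero.2 (hG_ne hy)), mul_one]
    _ = ∑ g ∈ t, f y * (starRingEnd ℂ (g y) / G y) * g y := by
        simp only [G, Complex.ofReal_sum, Complex.normSq_eq_conj_mul_self, Finset.sum_div,
          Finset.mul_sum]
        exact Finset.sum_congr rfl fun g _ => by ring
    _ = _ := by simp

lemma isLocallyConstant_extend_zero {Z F : Type*} [TopologicalSpace Z] [T2Space Z] [Zero F]
    {e : Y → Z} (he : IsOpenEmbedding e) {f : Y → F} (hf : IsLocallyConstant f)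
    (hfc : HasCompactSupport f) : IsLocallyConstant (Function.extend e f 0) := by
  have hK : IsClosed (e '' tsupport f) := (hfc.image he.continuous).isClosed
  refine (IsLocallyConstant.iff_eventually_eq _).2 fun z => ?_
  by_cases hz : z ∈ e '' tsupport f
  · obtain ⟨y, -, rfl⟩ := hz
    rw [← he.map_nhds_eq, eventually_map]
    filter_upwards [hf.eventually_eq y] with y' hy'
    rw [he.injective.extend_apply, he.injective.extend_apply, hy']
  · have extend_eq_zero {z' : Z} (hz' : z' ∉ e '' tsupport f) : Function.extend e f 0 z' = 0 := by
      by_cases h : ∃ y, e y = z'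
      · obtain ⟨y, rfl⟩ := h
        rw [he.injective.extend_apply]
        exact image_eq_zero_of_notMem_tsupport fun hy => hz' ⟨y, hy, rfl⟩
      · exact Function.extend_apply' _ _ _ h
    filter_upwards [hK.isOpen_compl.mem_nhds hz] with z' hz'
    rw [extend_eq_zero hz', extend_eq_zero hz]

end NonvanishingSum

lemma exists_addChar_mul_ne {k : Type*} [Field k] {ψ : AddChar k ℂ} (hψ : ψ ≠ 1) {x y : k}
    (hxy : x ≠ y) : ∃ b, ψ (b * x) ≠ ψ (b * y) := by
  obtain ⟨c, hc⟩ := AddChar.ne_one_iff.1 hψ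
  refine ⟨c / (x - y), fun h => hc ?_⟩
  rw [← div_mul_cancel₀ c (sub_ne_zero.2 hxy), mul_sub, AddChar.map_sub_eq_div, h,
    div_self (ψ.val_isUnit _).ne_zero]

section Multipliers

variable {k : Type*} [NontriviallyNormedField k]

/-- The functions on `k` by which a space of functions on `kˣ` is stable under multiplication. -/
def multipliers (M : Submodule ℂ (kˣ → ℂ)) : Subalgebra ℂ (k → ℂ) where
  carrier := {a | ∀ g ∈ M, (fun y : kˣ => a y) * g ∈ M}
  mul_mem' {a b} ha hb g hg := by
    simpa only [← mul_assoc] using! ha _ (hb g hg)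
  add_mem' {a b} ha hb g hg := by
    simpa only [← add_mul] using! M.add_mem (ha g hg) (hb g hg)
  algebraMap_mem' c g hg := M.smul_mem c hg

variable {ψ : AddChar k ℂ} {M : Submodule ℂ (kˣ → ℂ)}

lemma mul_mem_of_isLocallyConstant [ProperSpace k] (hψ : IsLocallyConstant ψ) (hψ₁ : ψ ≠ 1)
    (hM : GRep.Invariant (repCx k ψ) M) (hMC : M ≤ Cb k) {φ : k → ℂ} (hφ : IsLocallyConstant φ)
    {g : kˣ → ℂ} (hg : g ∈ M) : (fun y : kˣ => φ y) * g ∈ M := by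
  let S : Set (k → ℂ) := Set.range fun b x => ψ (b * x)
  have hS : ∀ a ∈ S, IsLocallyConstant a := by
    rintro _ ⟨b, rfl⟩
    exact hψ.comp_continuous (continuous_const_mul b)
  have hSM : Algebra.adjoin ℂ S ≤ multipliers M := by
    refine Algebra.adjoin_le ?_
    rintro _ ⟨b, rfl⟩ g hg
    convert hM (sS b) g hg using 1
    ext y; simp [sS]
  obtain ⟨-, R, hR⟩ := mem_Cb_iff_norm_le.1 (hMC hg)
  obtain ⟨a, haS, haφ⟩ := exists_mem_adjoin_eqOn hS (isCompact_closedBall (0 : k) R)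
    (fun x _ y _ hxy => by simpa [S] using exists_addChar_mul_ne hψ₁ hxy) hφ
  convert hSM haS g hg using 1
  ext y
  by_cases hy : g y = 0
  · simp [hy]
  · simp [haφ (mem_closedBall_zero_iff.2 (hR y hy))]

lemma SSx_mul_mem [ProperSpace k] (hψ : IsLocallyConstant ψ) (hψ₁ : ψ ≠ 1)
    (hM : GRep.Invariant (repCx k ψ) M) (hMC : M ≤ Cb k) {f g : kˣ → ℂ} (hf : f ∈ SSx k)
    (hg : g ∈ M) : f * g ∈ M := by
  have he := Units.isOpenEmbedding_val (R := k)
  simpa only [he.injective.extend_apply] using! mul_mem_of_isLocallyConstant hψ hψ₁ hM hMC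
    (isLocallyConstant_extend_zero he hf.1 hf.2) hg

theorem SSx_le_of_invariant [ProperSpace k] (hψ : IsLocallyConstant ψ) (hψ₁ : ψ ≠ 1)
    (hM : GRep.Invariant (repCx k ψ) M) (hMC : M ≤ Cb k) (hM₀ : M ≠ ⊥) : SSx k ≤ M := by
  intro f hf
  have exists_ne_zero (y : kˣ) : ∃ g ∈ M, g y ≠ 0 := by
    obtain ⟨g, hg, hg₀⟩ := M.ne_bot_iff.1 hM₀
    obtain ⟨x, hx⟩ := Function.ne_iff.1 hg₀
    exact ⟨_, hM (xT (y⁻¹ * x)) g hg, by simpa [xT] using hx⟩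
  obtain ⟨t, h, htM, hh, rfl⟩ := exists_sum_mul_eq_of_hasCompactSupport (N := M)
    (fun g hg => (hMC hg).1) exists_ne_zero hf.1 hf.2
  exact M.sum_mem fun g hg => SSx_mul_mem hψ hψ₁ hM hMC (hh g hg) (htM hg)

end Multipliers

section Coinvariants

variable {k : Type*} [NontriviallyNormedField k] {ψ : AddChar k ℂ} {M : Submodule ℂ (kˣ → ℂ)}

lemma exists_repCx_sS_ne (hψ₁ : ψ ≠ 1) {f : kˣ → ℂ} (hf : f ≠ 0) :
    ∃ b, repCx k ψ (sS b) f ≠ f := by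
  obtain ⟨y, hy⟩ := Function.ne_iff.1 hf
  obtain ⟨b, hb⟩ := exists_addChar_mul_ne hψ₁ y.ne_zero
  refine ⟨b, fun h => hb ?_⟩
  have hy' : ψ (b * y) * f y = 1 * f y := by simpa [sS] using congrFun h y
  simpa using mul_right_cancel₀ hy hy'

lemma repCx_sS_sub_mem_SSx [ProperSpace k] (hψ : IsLocallyConstant ψ) {f : kˣ → ℂ}
    (hf : f ∈ Cb k) (b : k) : repCx k ψ (sS b) f - f ∈ SSx k := by
  refine mem_SSx_iff_germ_eq_zero.2 ⟨(Cb k).sub_mem (Cb_invariant hψ _ _ hf) hf, ?_⟩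
  rw [map_sub, germ_repCx hψ, sS, map_one, Module.End.one_apply, sub_self]

lemma SSx_ne_bot [IsUltrametricDist k] [ProperSpace k] (hψ : IsLocallyConstant ψ) (hψ₁ : ψ ≠ 1) :
    SSx k ≠ ⊥ := by
  obtain ⟨f, hf, hf₁⟩ := exists_mem_Cb_germ_eq (IsLocallyConstant.const (X := kˣ) (1 : ℂ))
  have hf₀ : f ≠ 0 := by
    rintro rfl
    obtain ⟨_, hy⟩ := (germ_eq_iff.1 hf₁).exists
    exact zero_ne_one hy
  obtain ⟨b, hb⟩ := exists_repCx_sS_ne hψ₁ hf₀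
  exact (SSx k).ne_bot_iff.2 ⟨_, repCx_sS_sub_mem_SSx hψ hf b, sub_ne_zero.2 hb⟩

theorem ker_germ_domRestrict_eq_sCoinvKer [ProperSpace k] (hψ : IsLocallyConstant ψ)
    (hψ₁ : ψ ≠ 1) (hM : GRep.Invariant (repCx k ψ) M) (hMC : M ≤ Cb k) (hM₀ : M ≠ ⊥) :
    LinearMap.ker ((germ k).domRestrict M) = sCoinvKer (GRep.sub (repCx k ψ) hM) := by
  set C := sCoinvKer (GRep.sub (repCx k ψ) hM)
  have mem_C (b : k) (f : M) : GRep.sub (repCx k ψ) hM (sS b) f - f ∈ C :=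
    Submodule.subset_span ⟨b, f, rfl⟩
  have hCC : C.map M.subtype ≤ Cb k := M.map_subtype_le C |>.trans hMC
  have hC : GRep.Invariant (repCx k ψ) (C.map M.subtype) :=
    GRep.map_invariant _ _ M.subtype (fun _ _ => rfl) C (sCoinvKer_invariant _)
  have hC₀ : C.map M.subtype ≠ ⊥ := by
    obtain ⟨f, hf, hf₀⟩ := M.ne_bot_iff.1 hM₀
    obtain ⟨b, hb⟩ := exists_repCx_sS_ne hψ₁ hf₀
    exact (Submodule.ne_bot_iff _).2 ⟨_, ⟨_, mem_C b ⟨f, hf⟩, rfl⟩, sub_ne_zero.2 hb⟩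
  apply le_antisymm
  · intro f hf
    have hfS : (f : kˣ → ℂ) ∈ SSx k := mem_SSx_iff_germ_eq_zero.2 ⟨hMC f.2, hf⟩
    obtain ⟨f', hf', h⟩ := SSx_le_of_invariant hψ hψ₁ hC hCC hC₀ hfS
    rwa [← Subtype.ext h]
  · refine Submodule.span_le.2 ?_
    rintro _ ⟨b, f, rfl⟩
    exact (mem_SSx_iff_germ_eq_zero.1 (repCx_sS_sub_mem_SSx hψ (hMC f.2) b)).2

end Coinvariants

section AbstractReps

variable {k : Type*} [Field k]
variable {V W : Type*} [AddCommGroup V] [Module ℂ V] [AddCommGroup W] [Module ℂ W]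

lemma iso_iff_exists_range_eq {G : Type*} [Monoid G] {E : Type*} [AddCommGroup E] [Module ℂ E]
    {ρ : Representation ℂ G V} {τ : Representation ℂ G W} {σ : Representation ℂ G E}
    {i : V →ₗ[ℂ] E} (hi : Function.Injective i) (hiσ : GRep.Equivariant ρ σ i) :
    GRep.Iso ρ τ ↔ ∃ j : W →ₗ[ℂ] E, Function.Injective j ∧ GRep.Equivariant τ σ j ∧
      LinearMap.range j = LinearMap.range i := by
  constructor
  · rintro ⟨e, he⟩
    refine ⟨i ∘ₗ e.symm, hi.comp e.symm.injective, fun g w => ?_,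
      LinearMap.range_comp_of_range_eq_top i e.symm.range⟩
    have hw : e.symm (τ g w) = ρ g (e.symm w) := e.injective (by simp [he])
    simp [hw, hiσ g]
  · rintro ⟨j, hj, hjσ, hrange⟩
    let e : V ≃ₗ[ℂ] W := LinearEquiv.ofInjective i hi ≪≫ₗ LinearEquiv.ofEq _ _ hrange.symm ≪≫ₗ
      (LinearEquiv.ofInjective j hj).symm
    have hje (v : V) : j (e v) = i v :=
      congrArg Subtype.val ((LinearEquiv.ofInjective j hj).apply_symm_apply _)
    exact ⟨e, fun g v => hj (by rw [hje, hiσ, hjσ, hje])⟩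

lemma piZeroT_iso_iff {E : Type*} [AddCommGroup E] [Module ℂ E] {ρ : Rep k V}
    {τ : Representation ℂ kˣ W} {σ : Representation ℂ kˣ E} {q : V →ₗ[ℂ] E}
    (hker : LinearMap.ker q = sCoinvKer ρ) (hq : ∀ u v, q (ρ (xT u) v) = σ u (q v)) :
    GRep.Iso (piZeroT ρ) τ ↔ ∃ j : W →ₗ[ℂ] E, Function.Injective j ∧ GRep.Equivariant τ σ j ∧
      LinearMap.range j = LinearMap.range q := by
  have hinj : Function.Injective ((sCoinvKer ρ).liftQ q hker.ge) :=
    LinearMap.ker_eq_bot.1 (Submodule.ker_liftQ_eq_bot _ _ _ hker.le)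
  rw [iso_iff_exists_range_eq hinj fun u => ?_, Submodule.range_liftQ]
  exact fun v => Submodule.Quotient.induction_on _ v (hq u)

lemma subsingleton_of_iso {ρ : Rep k V} {σ : Rep k W} (hσ : sInv σ = ⊥)
    (hρ : ∀ b v, ρ (sS b) v = v) (h : GRep.Iso ρ σ) : Subsingleton V := by
  obtain ⟨e, he⟩ := h
  refine subsingleton_of_forall_eq 0 fun v => e.map_eq_zero_iff.1 ?_
  rw [← Submodule.mem_bot ℂ, ← hσ]
  exact fun b => by rw [← he, hρ]

lemma subquot_iso_sub {G : Type*} [Monoid G] {ρ : Representation ℂ G V} {A B : Submodule ℂ V}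
    (hA : GRep.Invariant ρ A) (hB : GRep.Invariant ρ B) (h : A = ⊥) :
    GRep.Iso (GRep.subquot ρ hA hB) (GRep.sub ρ hB) := by
  have h' : A.comap B.subtype = ⊥ := by rw [h, Submodule.comap_bot, Submodule.ker_subtype]
  refine ⟨Submodule.quotEquivOfEqBot _ h', fun g v => ?_⟩
  obtain ⟨v, rfl⟩ := Submodule.Quotient.mk_surjective _ v
  rfl

lemma nonempty_compSeries_of_le_of_ne_bot {ρ : Rep k V} {A : Submodule ℂ V}
    [Module.Finite ℂ (V ⧸ A)] (hA : ∀ C, GRep.Invariant ρ C → C ≠ ⊥ → A ≤ C) :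
    Nonempty (CompSeries ρ) := by
  let I := {N : Submodule ℂ V // GRep.Invariant ρ N}
  let F : I → Prop × Submodule ℂ (V ⧸ A) := fun N => (N.1 ≠ ⊥, N.1.map A.mkQ)
  have hF : StrictMono F := by
    intro N N' h
    have hN' : N'.1 ≠ ⊥ := (bot_le.trans_lt (Subtype.coe_lt_coe.2 h)).ne'
    by_cases hN : N.1 = ⊥
    · refine Prod.mk_lt_mk.2 (Or.inl ⟨?_, Submodule.map_mono h.le⟩)
      simpa [hN, hN'] using bot_lt_top (α := Prop)
    · refine Prod.mk_lt_mk.2 (Or.inr ⟨fun _ => hN', ?_⟩)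
      refine (Submodule.map_mono h.le).lt_of_not_ge fun hle => h.not_ge ?_
      have := Submodule.comap_mono (f := A.mkQ) hle
      rwa [Submodule.comap_map_mkQ, Submodule.comap_map_mkQ, sup_eq_right.2 (hA _ N.2 hN),
        sup_eq_right.2 (hA _ N'.2 hN')] at this
  have : WellFoundedLT I := hF.wellFoundedLT
  have : WellFoundedGT I := hF.wellFoundedGT
  let bot : I := ⟨⊥, fun g v hv => by simp_all⟩
  let top : I := ⟨⊤, fun _ _ _ => trivial⟩
  obtain ⟨a, h₀, n, hn, hcov⟩ :=
    exists_covBy_seq_of_wellFoundedLT_wellFoundedGT_of_le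
      (show bot ≤ top from bot_le (α := Submodule ℂ V))
  exact ⟨{
    n := n
    W := fun i => a i
    bot := congrArg Subtype.val h₀
    top := congrArg Subtype.val hn
    inv := fun i => (a i).2
    lt := fun i hi => (hcov i hi).lt
    maximal := fun i hi C hC h₁ h₂ =>
      ((hcov i hi).eq_or_eq (c := ⟨C, hC⟩) h₁ h₂).imp
        (congrArg Subtype.val) (congrArg Subtype.val) }⟩

namespace CompSeries

lemma deg_of_subsingleton [Subsingleton V] {ρ : Rep k V} (c : CompSeries ρ) (σ : Rep k W) :
    c.deg σ = 0 := by
  have hn : c.n = 0 := by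
    by_contra hn
    exact (c.lt 0 (Nat.pos_of_ne_zero hn)).ne (Subsingleton.elim _ _)
  exact Nat.le_zero.1 ((Finset.card_le_univ _).trans_eq (by rw [Fintype.card_fin, hn]))

lemma deg_eq_one {ρ : Rep k V} (c : CompSeries ρ) {σ : Rep k W} (hσ : sInv σ = ⊥)
    {A : Submodule ℂ V} (hA : GRep.Invariant ρ A) (hA₀ : A ≠ ⊥)
    (hmin : ∀ C, GRep.Invariant ρ C → C ≠ ⊥ → A ≤ C) (hquot : ∀ b v, ρ (sS b) v - v ∈ A)
    (hAσ : GRep.Iso (GRep.sub ρ hA) σ) : c.deg σ = 1 := by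
  have hn : 0 < c.n := Nat.pos_of_ne_zero fun hn => hA₀ <| by
    rw [← le_bot_iff, ← c.bot, ← hn, c.top]
    exact le_top
  have le_W {i : ℕ} (hi : i < c.n) : A ≤ c.W (i + 1) :=
    hmin _ (c.inv _) (bot_le.trans_lt (c.lt i hi)).ne'
  have hW₁ : A = c.W 1 :=
    (c.maximal 0 hn A hA (c.bot.trans_le bot_le) (le_W hn)).resolve_left (c.bot ▸ hA₀)
  have iso_iff (i : Fin c.n) :
      GRep.Iso (GRep.subquot ρ (c.inv i) (c.inv (i + 1))) σ ↔ i = ⟨0, hn⟩ := by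
    obtain ⟨i, hi⟩ := i
    cases i with
    | zero =>
      refine iff_of_true ?_ rfl
      obtain ⟨e, he⟩ := subquot_iso_sub (c.inv 0) (c.inv 1) c.bot
      subst hW₁
      obtain ⟨e', he'⟩ := hAσ
      exact ⟨e.trans e', fun g v => by simp [he, he']⟩
    | succ i =>
      refine iff_of_false (fun h => ?_) (by simp)
      refine (c.lt _ hi).not_ge (Submodule.comap_subtype_eq_top.1 ?_)
      refine Submodule.Quotient.subsingleton_iff.1 (subsingleton_of_iso hσ ?_ h)
      refine fun b v => Submodule.Quotient.induction_on _ v fun v => ?_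
      exact (Submodule.Quotient.eq _).2 (le_W (by omega) (hquot b v))
  simp [deg, iso_iff, Finset.filter_eq']

end CompSeries

end AbstractReps

section Degree

variable {k : Type*} [NontriviallyNormedField k] {ψ : AddChar k ℂ}

lemma sInv_SRep_eq_bot (hψ : IsLocallyConstant ψ) (hψ₁ : ψ ≠ 1) : sInv (SRep ψ hψ) = ⊥ := by
  refine (Submodule.eq_bot_iff _).2 fun f hf => ?_
  by_contra hf₀
  obtain ⟨b, hb⟩ := exists_repCx_sS_ne hψ₁ (Subtype.coe_ne_coe.2 hf₀)
  exact hb (congrArg Subtype.val (hf b))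

theorem exists_compSeries_deg_SRep_eq_one_iff [IsUltrametricDist k] [ProperSpace k]
    {M : Submodule ℂ (kˣ → ℂ)} (hψ : IsLocallyConstant ψ) (hψ₁ : ψ ≠ 1)
    (hM : GRep.Invariant (repCx k ψ) M) (hMC : M ≤ Cb k)
    [Module.Finite ℂ (M ⧸ sCoinvKer (GRep.sub (repCx k ψ) hM))] :
    (∃ c : CompSeries (GRep.sub (repCx k ψ) hM), c.deg (SRep ψ hψ) = 1) ↔ M ≠ ⊥ := by
  refine ⟨?_, fun hM₀ => ?_⟩
  · rintro ⟨c, hc⟩ rfl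
    rw [c.deg_of_subsingleton] at hc
    exact zero_ne_one hc
  have hSM : SSx k ≤ M := SSx_le_of_invariant hψ hψ₁ hM hMC hM₀
  set A : Submodule ℂ M := (SSx k).comap M.subtype
  have hA : GRep.Invariant (GRep.sub (repCx k ψ) hM) A :=
    fun g f hf => SSx_invariant ψ hψ g f hf
  have hker : A = sCoinvKer (GRep.sub (repCx k ψ) hM) := by
    rw [← ker_germ_domRestrict_eq_sCoinvKer hψ hψ₁ hM hMC hM₀]
    ext f
    exact mem_SSx_iff_germ_eq_zero.trans (and_iff_right (hMC f.2))
  have : Module.Finite ℂ (M ⧸ A) := by rwa [hker]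
  have hmin (C) (hC : GRep.Invariant (GRep.sub (repCx k ψ) hM) C) (hC₀ : C ≠ ⊥) : A ≤ C := by
    rw [← Submodule.comap_map_eq_of_injective M.subtype_injective C]
    refine Submodule.comap_mono (SSx_le_of_invariant hψ hψ₁ ?_ ?_ ?_)
    · rintro g _ ⟨f, hf, rfl⟩
      exact ⟨_, hC g f hf, rfl⟩
    · exact (Submodule.map_subtype_le M C).trans hMC
    · exact ((Submodule.map_injective_of_injective M.subtype_injective).ne_iff'
        (Submodule.map_bot _)).2 hC₀
  have hA₀ : A ≠ ⊥ := fun h => SSx_ne_bot hψ hψ₁ <| by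
    rw [← inf_eq_right.2 hSM, ← Submodule.map_comap_subtype]
    rw [show (SSx k).comap M.subtype = ⊥ from h, Submodule.map_bot]
  obtain ⟨c⟩ := nonempty_compSeries_of_le_of_ne_bot hmin
  exact ⟨c, c.deg_eq_one (sInv_SRep_eq_bot hψ hψ₁) hA hA₀ hmin
    (fun b f => repCx_sS_sub_mem_SSx hψ (hMC f.2) b)
    ⟨Submodule.comapSubtypeEquivOfLe hSM, fun _ _ => rfl⟩⟩

end Degree

section MatrixCoefficients

variable {X : Type*} [AddCommGroup X] [Module ℂ X]

/-- The matrix coefficients `y ↦ l (τ y x)` of a representation with respect to a fixed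
functional `l`. For finite-dimensional `X` the map is injective exactly when `l` is a cyclic
vector of the dual representation. -/
def matrixCoeff {G : Type*} [Monoid G] (τ : Representation ℂ G X) (l : Module.Dual ℂ X) :
    X →ₗ[ℂ] G → ℂ :=
  LinearMap.pi fun y => l ∘ₗ τ y

@[simp] lemma matrixCoeff_apply {G : Type*} [Monoid G] (τ : Representation ℂ G X)
    (l : Module.Dual ℂ X) (x : X) (y : G) : matrixCoeff τ l x y = l (τ y x) := rfl

lemma range_matrixCoeff_le [Module.Finite ℂ X] {G : Type*} [CommMonoid G]
    {τ : Representation ℂ G X} {l : Module.Dual ℂ X} (hl : Function.Injective (matrixCoeff τ l))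
    (l' : Module.Dual ℂ X) :
    LinearMap.range (matrixCoeff τ l') ≤ LinearMap.range (matrixCoeff τ l) := by
  have span_eq_top : Submodule.span ℂ (Set.range fun y => l ∘ₗ τ y) = ⊤ := by
    refine Submodule.span_eq_top_of_ne_zero fun x hx => ?_
    obtain ⟨y, hy⟩ := Function.ne_iff.1 ((map_ne_zero_iff _ hl).2 hx)
    exact ⟨_, ⟨y, rfl⟩, hy⟩
  rintro _ ⟨x, rfl⟩
  have hl' : l' ∈ Submodule.span ℂ (Set.range fun y => l ∘ₗ τ y) := span_eq_top ▸ trivial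
  induction hl' using Submodule.span_induction with
  | mem _ h =>
    obtain ⟨y, rfl⟩ := h
    refine ⟨τ y x, funext fun z => congrArg l ?_⟩
    rw [← Module.End.mul_apply, ← Module.End.mul_apply, ← map_mul, ← map_mul, mul_comm]
  | zero => exact zero_mem _
  | add l₁ l₂ _ _ h₁ h₂ => exact add_mem h₁ h₂
  | smul c l' _ h => exact Submodule.smul_mem _ c h

end MatrixCoefficients

section CyclicModules

variable {k : Type*} [Field k] {X : Type*} [AddCommGroup X] [Module ℂ X] [Module.Finite ℂ X]
variable {τ : Representation ℂ kˣ X}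

lemma iSupIndep_tEigenT {X : Type*} [AddCommGroup X] [Module ℂ X] (τ : Representation ℂ kˣ X) :
    iSupIndep (tEigenT τ) := by
  have indep : iSupIndep fun χ : kˣ → ℂ => ⨅ u, Module.End.maxGenEigenspace (τ u) (χ u) :=
    Module.End.independent_iInf_maxGenEigenspace_of_forall_mapsTo _ fun u v c =>
      Module.End.mapsTo_maxGenEigenspace_of_comm ((Commute.all v u).map τ) c
  have injective_coe : Function.Injective fun (χ : kˣ →* ℂˣ) (u : kˣ) => (χ u : ℂ) :=
    fun χ χ' h => by ext u; exact congrFun h u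
  refine (indep.comp injective_coe).mono fun χ x hx => Submodule.mem_iInf _ |>.2 fun u => ?_
  exact (Module.End.genEigenspace (τ u) _).monotone le_top (Module.End.mem_eigenspace_iff.2 (hx u))

lemma exists_mem_tEigenT_of_forall_apply_eq_smul {X : Type*} [AddCommGroup X] [Module ℂ X]
    {τ : Representation ℂ kˣ X} {x : X} (hx₀ : x ≠ 0) (hx : ∀ u, ∃ c : ℂ, τ u x = c • x) :
    ∃ χ, x ∈ tEigenT τ χ := by
  choose c hc using hx
  have smul_inj {a b : ℂ} (h : a • x = b • x) : a = b := smul_left_injective ℂ hx₀ h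
  let χ : kˣ →* ℂ :=
    { toFun := c
      map_one' := smul_inj (by rw [← hc, map_one, Module.End.one_apply, one_smul])
      map_mul' := fun u v => smul_inj <| by
        rw [← hc, map_mul, Module.End.mul_apply, hc v, map_smul, hc u, smul_smul, mul_comm] }
  exact ⟨χ.toHomUnits, hc⟩

lemma exists_mem_tEigenT_of_invariant {N : Submodule ℂ X} (hN : GRep.Invariant τ N)
    (hN₀ : N ≠ ⊥) : ∃ χ, ∃ x ∈ N, x ≠ 0 ∧ x ∈ tEigenT τ χ := by
  obtain ⟨N', ⟨hN', hN'₀, hle⟩, hmin⟩ := exists_minimal_of_wellFoundedLT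
    (fun N' => GRep.Invariant τ N' ∧ N' ≠ ⊥ ∧ N' ≤ N) ⟨N, hN, hN₀, le_rfl⟩
  have scalar (u : kˣ) : ∃ c : ℂ, N' ≤ Module.End.eigenspace (τ u) c := by
    have : Nontrivial N' := Submodule.nontrivial_iff_ne_bot.2 hN'₀
    obtain ⟨c, hc⟩ := Module.End.exists_eigenvalue (GRep.sub τ hN' u)
    obtain ⟨x, hx⟩ := hc.exists_hasEigenvector
    have hx' : (x : X) ∈ N' ⊓ Module.End.eigenspace (τ u) c :=
      ⟨x.2, Module.End.mem_eigenspace_iff.2 (congrArg Subtype.val hx.apply_eq_smul)⟩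
    refine ⟨c, (hmin ⟨?_, ?_, inf_le_left.trans hle⟩ inf_le_left).trans inf_le_right⟩
    · refine fun v y hy => ⟨hN' v y hy.1, ?_⟩
      exact Module.End.mapsTo_genEigenspace_of_comm ((Commute.all u v).map τ) c 1 hy.2
    · exact (Submodule.ne_bot_iff _).2 ⟨x, hx', Subtype.coe_ne_coe.2 hx.2⟩
  choose c hc using scalar
  obtain ⟨x, hx, hx₀⟩ := N'.ne_bot_iff.1 hN'₀
  obtain ⟨χ, hχ⟩ := exists_mem_tEigenT_of_forall_apply_eq_smul hx₀ fun u =>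
    ⟨c u, Module.End.mem_eigenspace_iff.1 (hc u hx)⟩
  exact ⟨χ, x, hle hx, hx₀, hχ⟩

theorem TCyclic.exists_injective_matrixCoeff (hτ : TCyclic τ) :
    ∃ l, Function.Injective (matrixCoeff τ l) := by
  have : Finite {χ // tEigenT τ χ ≠ ⊥} :=
    WellFoundedGT.finite_ne_bot_of_iSupIndep (iSupIndep_tEigenT τ)
  choose v hv using fun χ => ((Submodule.finrank_le_one_iff_isPrincipal _).1 (hτ χ)).principal
  have hv₀ (χ : {χ // tEigenT τ χ ≠ ⊥}) : v χ ≠ 0 := fun h => χ.2 (by simp [hv, h])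
  obtain ⟨l, hl⟩ := Module.exists_dual_forall_apply_ne_zero (K := ℂ) _ hv₀
  refine ⟨l, LinearMap.ker_eq_bot.1 ?_⟩
  by_contra hker
  have ker_invariant : GRep.Invariant τ (LinearMap.ker (matrixCoeff τ l)) := by
    refine fun u x hx => funext fun y => ?_
    rw [matrixCoeff_apply, ← Module.End.mul_apply, ← map_mul]
    exact congrFun hx (y * u)
  obtain ⟨χ, x, hx, hx₀, hxχ⟩ := exists_mem_tEigenT_of_invariant ker_invariant hker
  have hlx : l x = 0 := by simpa using congrFun hx 1
  have hχ : tEigenT τ χ ≠ ⊥ := (Submodule.ne_bot_iff _).2 ⟨x, hxχ, hx₀⟩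
  obtain ⟨c, rfl⟩ := Submodule.mem_span_singleton.1 ((hv χ).le hxχ)
  rcases mul_eq_zero.1 ((map_smul l c _).symm.trans hlx) with rfl | hl₀
  · exact hx₀ (zero_smul _ _)
  · exact hl ⟨χ, hχ⟩ hl₀

end CyclicModules

section GermsOfMatrixCoefficients

variable {k : Type*} {X : Type*} [AddCommGroup X] [Module ℂ X]

lemma TIsSmooth.isLocallyConstant [Field k] [TopologicalSpace k] [IsTopologicalRing k]
    {τ : Representation ℂ kˣ X} (hτ : TIsSmooth τ) (x : X) :
    IsLocallyConstant fun y : kˣ => τ y x := by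
  refine (IsLocallyConstant.iff_eventually_eq _).2 fun y₀ => ?_
  have tendsto_one : Tendsto (fun y => y₀⁻¹ * y) (𝓝 y₀) (𝓝 1) := by
    simpa using (continuous_const_mul y₀⁻¹).tendsto y₀
  filter_upwards [tendsto_one.eventually ((hτ x).mem_nhds (by simp))] with y hy
  rw [← mul_inv_cancel_left y₀ y, map_mul, Module.End.mul_apply]
  exact congrArg (τ y₀) hy

lemma TIsSmooth.isLocallyConstant_matrixCoeff [Field k] [TopologicalSpace k] [IsTopologicalRing k]
    {τ : Representation ℂ kˣ X} (hτ : TIsSmooth τ) (l : Module.Dual ℂ X) (x : X) :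
    IsLocallyConstant (matrixCoeff τ l x) :=
  (hτ.isLocallyConstant x).comp l

lemma eventually_forall_apply_eq [Module.Finite ℂ X] {α : Type*} {f : Filter α}
    {F G : X →ₗ[ℂ] α → ℂ} (h : ∀ x, F x =ᶠ[f] G x) : ∀ᶠ y in f, ∀ x, F x y = G x y := by
  obtain ⟨s, hs⟩ := Module.finite_def.1 ‹Module.Finite ℂ X›
  filter_upwards [(eventually_all_finset s).2 fun x _ => h x] with y hy
  have : LinearMap.proj y ∘ₗ F = LinearMap.proj y ∘ₗ G := LinearMap.ext_on hs hy
  exact LinearMap.congr_fun this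

variable [NontriviallyNormedField k] {τ : Representation ℂ kˣ X}

lemma equivariant_germ_comp_matrixCoeff (τ : Representation ℂ kˣ X) (l : Module.Dual ℂ X) :
    GRep.Equivariant τ (germRep k) (germ k ∘ₗ matrixCoeff τ l) := by
  refine fun u x => congrArg (germ k) (funext fun y => ?_)
  simp [map_mul]

lemma injective_germ_comp_matrixCoeff_iff [Module.Finite ℂ X] {l : Module.Dual ℂ X} :
    Function.Injective (germ k ∘ₗ matrixCoeff τ l) ↔ Function.Injective (matrixCoeff τ l) := by
  refine ⟨fun h => Function.Injective.of_comp (f := germ k) h, fun hl => ?_⟩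
  rw [← LinearMap.ker_eq_bot]
  set N := LinearMap.ker (germ k ∘ₗ matrixCoeff τ l)
  have germ_eq (x : N) : matrixCoeff τ l x =ᶠ[atZero k] 0 := germ_eq_zero_iff.1 x.2
  obtain ⟨y, hy⟩ := (eventually_forall_apply_eq (F := matrixCoeff τ l ∘ₗ N.subtype)
    (G := 0) germ_eq).exists
  refine (Submodule.eq_bot_iff _).2 fun x hx => (map_eq_zero_iff _ hl).1 (funext fun z => ?_)
  have : τ (y⁻¹ * z) x ∈ N := by
    rw [LinearMap.mem_ker, equivariant_germ_comp_matrixCoeff, hx, map_zero]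
  simpa [← Module.End.mul_apply, ← map_mul] using hy ⟨_, this⟩

end GermsOfMatrixCoefficients

theorem exists_eq_top_of_forall_exists_mem {G : Type*} [Group G] [TopologicalSpace G]
    [IsTopologicalGroup G] [BaireSpace G] {C : Set G} (hC : IsCompact C)
    (hgen : Subgroup.closure C = ⊤) {P : ℕ → Subgroup G} (hP : Monotone P)
    (hclosed : ∀ n, IsClosed (P n : Set G)) (hcover : ∀ g, ∃ n, g ∈ P n) : ∃ n, P n = ⊤ := by
  obtain ⟨m, g, hg⟩ := nonempty_interior_of_iUnion_of_closed hclosed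
    (Set.iUnion_eq_univ_iff.2 hcover)
  have hopen (n) : IsOpen (P (max m n) : Set G) :=
    Subgroup.isOpen_of_mem_nhds _ <|
      mem_of_superset (mem_interior_iff_mem_nhds.1 hg) (hP (le_max_left m n))
  obtain ⟨n, hn⟩ := hC.elim_directed_cover (fun n => (P (max m n) : Set G)) hopen
    (fun g _ => (hcover g).elim fun n hn => Set.mem_iUnion.2 ⟨n, hP (le_max_right m n) hn⟩)
    (Monotone.directed_le fun a b hab => hP (max_le_max_left m hab))
  exact ⟨max m n, top_le_iff.1 (hgen ▸ (Subgroup.closure_le _).2 hn)⟩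

section TranslationInvariance

variable {k : Type*} [NontriviallyNormedField k]

lemma exists_isCompact_closure_eq_top [ProperSpace k] :
    ∃ C : Set kˣ, IsCompact C ∧ Subgroup.closure C = ⊤ := by
  obtain ⟨c, hc₀, hc⟩ : ∃ c : k, c ≠ 0 ∧ 1 < ‖c‖ :=
    (NormedField.exists_one_lt_norm k).imp fun c hc => ⟨norm_pos_iff.1 (one_pos.trans hc), hc⟩
  lift c to kˣ using hc₀.isUnit
  let C : Set kˣ := {y | 1 ≤ ‖(y : k)‖ ∧ ‖(y : k)‖ ≤ ‖(c : k)‖}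
  refine ⟨C, isCompact_annulus one_pos _, (Subgroup.eq_top_iff' _).2 fun y => ?_⟩
  obtain ⟨n, hn, hn'⟩ := exists_mem_Ico_zpow (norm_pos_iff.2 y.ne_zero) hc
  have hpos : 0 < ‖(c : k)‖ ^ n := by positivity
  have hcC : c ∈ C := ⟨hc.le, le_rfl⟩
  have hyC : y / c ^ n ∈ C := by
    constructor <;> rw [Units.val_div_eq_div_val, Units.val_zpow_eq_zpow_val, norm_div, norm_zpow]
    · rwa [one_le_div hpos]
    · rw [div_le_iff₀ hpos, mul_comm, ← zpow_add_one₀ (norm_ne_zero_iff.2 c.ne_zero)]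
      exact hn'.le
  rw [← mul_div_cancel (c ^ n) y]
  exact mul_mem (zpow_mem (Subgroup.subset_closure hcC) n) (Subgroup.subset_closure hyC)

/-- The translations `u` under which `h` is invariant as far as the punctured ball of radius `a`
can tell. -/
def periods {E : Type*} (h : kˣ → E) (a : ℝ) : Subgroup kˣ where
  carrier := {u | ∀ y : kˣ, ‖(y : k)‖ < a → ‖((y * u : kˣ) : k)‖ < a → h (y * u) = h y}
  one_mem' y _ _ := by rw [mul_one]
  mul_mem' {u v} hu hv y hy hyuv := by
    rcases lt_or_ge ‖((y * u : kˣ) : k)‖ a with hyu | hyu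
    · rw [← mul_assoc] at hyuv ⊢
      exact (hv _ hyu hyuv).trans (hu y hy hyu)
    · have hyv : ‖((y * v : kˣ) : k)‖ < a := by
        by_contra! hyv
        refine (mul_lt_mul'' hy hyuv (norm_nonneg _) (norm_nonneg _)).not_ge ?_
        calc a * a ≤ ‖((y * u : kˣ) : k)‖ * ‖((y * v : kˣ) : k)‖ :=
              mul_le_mul hyu hyv ((norm_nonneg _).trans hy.le) (norm_nonneg _)
          _ = ‖(y : k)‖ * ‖((y * (u * v) : kˣ) : k)‖ := by
            simp only [Units.val_mul, norm_mul]
            ring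
      rw [mul_comm u, ← mul_assoc] at hyuv ⊢
      exact (hu _ hyv hyuv).trans (hv y hy hyv)
  inv_mem' {u} hu y hy hyu := by
    simpa using (hu _ hyu (by simpa using hy)).symm

lemma isClosed_periods {E : Type*} {h : kˣ → E} (hh : IsLocallyConstant h) (a : ℝ) :
    IsClosed (periods h a : Set kˣ) := by
  change IsClosed {u | ∀ y : kˣ, ‖(y : k)‖ < a → ‖((y * u : kˣ) : k)‖ < a → h (y * u) = h y}
  simp only [Set.ofPred_forall]
  refine isClosed_iInter fun y => isClosed_iInter fun _ => ?_
  refine isClosed_imp ?_ ?_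
  · exact isOpen_lt (Units.continuous_val.comp (continuous_const_mul y)).norm continuous_const
  · exact (hh.comp_continuous (continuous_const_mul y)).isClosed_fiber (h y)

theorem eventually_eq_const_of_forall_eventually_mul_eq [ProperSpace k] {E : Type*} {h : kˣ → E}
    (hh : IsLocallyConstant h) (hinv : ∀ u, ∀ᶠ y in atZero k, h (y * u) = h y) :
    ∃ c, ∀ᶠ y in atZero k, h y = c := by
  obtain ⟨C, hC, hgen⟩ := exists_isCompact_closure_eq_top (k := k)
  have periods_monotone : Monotone fun n : ℕ => periods h (1 / (n + 1)) :=
    fun m n hmn u hu y hy hyu => hu y (hy.trans_le (Nat.one_div_le_one_div hmn))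
      (hyu.trans_le (Nat.one_div_le_one_div hmn))
  have exists_mem_periods (u : kˣ) : ∃ n : ℕ, u ∈ periods h (1 / (n + 1)) := by
    obtain ⟨a, ha, hau⟩ := eventually_atZero.1 (hinv u)
    obtain ⟨n, hn⟩ := exists_nat_one_div_lt ha
    exact ⟨n, fun y hy _ => hau y (hy.trans hn).le⟩
  obtain ⟨n, hn⟩ := exists_eq_top_of_forall_exists_mem hC hgen periods_monotone
    (fun n => isClosed_periods hh _) exists_mem_periods
  have norm_lt : ∀ᶠ y : kˣ in atZero k, ‖(y : k)‖ < 1 / (n + 1) :=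
    eventually_atZero.2 ⟨1 / (n + 1) / 2, by positivity, fun y hy =>
      hy.trans_lt (half_lt_self Nat.one_div_pos_of_nat)⟩
  obtain ⟨y₀, hy₀⟩ := norm_lt.exists
  refine ⟨h y₀, norm_lt.mono fun y hy => ?_⟩
  have hper : y₀⁻¹ * y ∈ periods h (1 / (n + 1)) := hn ▸ Subgroup.mem_top _
  simpa using hper y₀ hy₀ (by simpa using hy)

end TranslationInvariance

section GermsOfEquivariantMaps

variable {k : Type*} [NontriviallyNormedField k] [ProperSpace k]
variable {X : Type*} [AddCommGroup X] [Module ℂ X] [Module.Finite ℂ X]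

lemma isLocallyConstant_dual {Y : Type*} [TopologicalSpace Y] {h : Y → Module.Dual ℂ X}
    (hh : ∀ x, IsLocallyConstant fun y => h y x) : IsLocallyConstant h := by
  refine (IsLocallyConstant.iff_eventually_eq _).2 fun y₀ => ?_
  have apply_eq : ∀ᶠ y in 𝓝 y₀, ∀ x, h y x = h y₀ x :=
    eventually_forall_apply_eq (F := LinearMap.pi h) (G := LinearMap.pi fun _ => h y₀) fun x =>
      (hh x).eventually_eq y₀
  exact apply_eq.mono fun y hy => LinearMap.ext hy

theorem exists_eq_germ_matrixCoeff {τ : Representation ℂ kˣ X} (hτ : TIsSmooth τ)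
    {j : X →ₗ[ℂ] Germ (atZero k) ℂ} (hjτ : GRep.Equivariant τ (germRep k) j)
    (hj : ∀ x, ∃ f : LocallyConstant kˣ ℂ, germ k f = j x) :
    ∃ l, j = germ k ∘ₗ matrixCoeff τ l := by
  choose f hf using hj
  let b := Module.finBasis ℂ X
  let J : X →ₗ[ℂ] kˣ → ℂ := LocallyConstant.coeFnₗ ℂ ∘ₗ b.constr ℂ (f ∘ b)
  have hJ_lc (x : X) : IsLocallyConstant (J x) := (b.constr ℂ (f ∘ b) x).isLocallyConstant
  have hJ : germ k ∘ₗ J = j := b.ext fun i => by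
    simp only [J, LinearMap.comp_apply, b.constr_basis]
    exact hf (b i)
  have hJτ (u : kˣ) : ∀ᶠ y in atZero k, ∀ x, J (τ u x) y = J x (y * u) :=
    eventually_forall_apply_eq (F := J ∘ₗ τ u) (G := LinearMap.funLeft ℂ ℂ (· * u) ∘ₗ J) fun x =>
      germ_eq_iff.1 <| (LinearMap.congr_fun hJ _).trans <| (hjτ u x).trans <|
        congrArg (germRep k u) (LinearMap.congr_fun hJ x).symm
  let h (y : kˣ) : Module.Dual ℂ X := LinearMap.proj y ∘ₗ J ∘ₗ τ y⁻¹
  have hh : IsLocallyConstant h := isLocallyConstant_dual fun x => by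
    refine (IsLocallyConstant.iff_eventually_eq _).2 fun y₀ => ?_
    filter_upwards [((hτ.isLocallyConstant x).comp_continuous continuous_inv).eventually_eq y₀,
      (hJ_lc (τ y₀⁻¹ x)).eventually_eq y₀] with y hy hy'
    exact (congrArg (J · y) hy).trans hy'
  have hinv (u : kˣ) : ∀ᶠ y in atZero k, h (y * u) = h y := by
    filter_upwards [hJτ u] with y hy
    refine LinearMap.ext fun x => ?_
    simp [h, ← hy]
  obtain ⟨l, hl⟩ := eventually_eq_const_of_forall_eventually_mul_eq hh hinv
  refine ⟨l, hJ.symm.trans (LinearMap.ext fun x => germ_eq_iff.2 ?_)⟩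
  filter_upwards [hl] with y hy
  simp [← hy, h]

end GermsOfEquivariantMaps

section SubmodulesOfCb

variable {k : Type*} [NontriviallyNormedField k]

/-- The functions of `C_b^∞(kˣ)` with germ in `W`; every nonzero `TS`-submodule of `C_b^∞(kˣ)` is
of this form, `W` being a model of its module of coinvariants. -/
def cbOfGerms (W : Submodule ℂ (Germ (atZero k) ℂ)) : Submodule ℂ (kˣ → ℂ) :=
  Cb k ⊓ W.comap (germ k)

variable {ψ : AddChar k ℂ} {W : Submodule ℂ (Germ (atZero k) ℂ)} {M : Submodule ℂ (kˣ → ℂ)}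

lemma mem_cbOfGerms {f : kˣ → ℂ} : f ∈ cbOfGerms W ↔ f ∈ Cb k ∧ germ k f ∈ W := Iff.rfl

variable [ProperSpace k]

lemma cbOfGerms_invariant (hψ : IsLocallyConstant ψ) (hW : GRep.Invariant (germRep k) W) :
    GRep.Invariant (repCx k ψ) (cbOfGerms W) := by
  rintro g f ⟨hf, hfW⟩
  exact mem_cbOfGerms.2 ⟨Cb_invariant hψ g f hf, germ_repCx hψ g f ▸ hW g.t _ hfW⟩

lemma cbOfGerms_ne_bot [IsUltrametricDist k] (hψ : IsLocallyConstant ψ) (hψ₁ : ψ ≠ 1)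
    (W : Submodule ℂ (Germ (atZero k) ℂ)) : cbOfGerms W ≠ ⊥ := by
  refine ne_bot_of_le_ne_bot (SSx_ne_bot hψ hψ₁) fun f hf => ?_
  obtain ⟨hfC, hf₀⟩ := mem_SSx_iff_germ_eq_zero.1 hf
  exact mem_cbOfGerms.2 ⟨hfC, hf₀ ▸ zero_mem W⟩

lemma map_germ_cbOfGerms [IsUltrametricDist k]
    (hW : ∀ w ∈ W, ∃ f : LocallyConstant kˣ ℂ, germ k f = w) :
    (cbOfGerms W).map (germ k) = W := by
  refine le_antisymm (Submodule.map_le_iff_le_comap.2 inf_le_right) fun w hw => ?_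
  obtain ⟨f, rfl⟩ := hW w hw
  obtain ⟨g, hg, hgf⟩ := exists_mem_Cb_germ_eq f.isLocallyConstant
  exact ⟨g, mem_cbOfGerms.2 ⟨hg, hgf ▸ hw⟩, hgf⟩

lemma cbOfGerms_map_germ (hψ : IsLocallyConstant ψ) (hψ₁ : ψ ≠ 1)
    (hM : GRep.Invariant (repCx k ψ) M) (hMC : M ≤ Cb k) (hM₀ : M ≠ ⊥) :
    cbOfGerms (M.map (germ k)) = M := by
  refine le_antisymm ?_ (le_inf hMC (Submodule.le_comap_map _ _))
  rintro f ⟨hf, g, hg, hgf⟩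
  have hfg : f - g ∈ SSx k :=
    mem_SSx_iff_germ_eq_zero.2 ⟨sub_mem hf (hMC hg), by rw [map_sub, hgf, sub_self]⟩
  simpa using add_mem (SSx_le_of_invariant hψ hψ₁ hM hMC hM₀ hfg) hg

variable {X : Type*} [AddCommGroup X] [Module ℂ X] [Module.Finite ℂ X]
variable {τ : Representation ℂ kˣ X} {l : Module.Dual ℂ X}

theorem piZeroT_iso_iff_map_germ_eq (hψ : IsLocallyConstant ψ) (hψ₁ : ψ ≠ 1)
    (hM : GRep.Invariant (repCx k ψ) M) (hMC : M ≤ Cb k) (hM₀ : M ≠ ⊥)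
    (hτ : TIsSmooth τ) (hl : Function.Injective (matrixCoeff τ l)) :
    GRep.Iso (piZeroT (GRep.sub (repCx k ψ) hM)) τ ↔
      M.map (germ k) = LinearMap.range (germ k ∘ₗ matrixCoeff τ l) := by
  rw [piZeroT_iso_iff (ker_germ_domRestrict_eq_sCoinvKer hψ hψ₁ hM hMC hM₀)
    (σ := germRep k) fun u f => germ_repCx hψ (xT u) f, LinearMap.range_domRestrict]
  refine ⟨?_, fun h => ⟨_, injective_germ_comp_matrixCoeff_iff.2 hl,
    equivariant_germ_comp_matrixCoeff τ l, h.symm⟩⟩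
  rintro ⟨j, hj, hjτ, hrange⟩
  have exists_germ_eq (x : X) : ∃ f : LocallyConstant kˣ ℂ, germ k f = j x := by
    obtain ⟨f, hf, hfx⟩ := hrange.le (LinearMap.mem_range_self j x)
    exact ⟨⟨f, (hMC hf).1⟩, hfx⟩
  obtain ⟨l', rfl⟩ := exists_eq_germ_matrixCoeff hτ hjτ exists_germ_eq
  have hl' := injective_germ_comp_matrixCoeff_iff.1 hj
  rw [← hrange, LinearMap.range_comp, LinearMap.range_comp,
    (range_matrixCoeff_le hl l').antisymm (range_matrixCoeff_le hl' l)]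

theorem piZeroT_iso_iff_eq_cbOfGerms [IsUltrametricDist k] (hψ : IsLocallyConstant ψ)
    (hψ₁ : ψ ≠ 1) (hM : GRep.Invariant (repCx k ψ) M) (hMC : M ≤ Cb k) (hM₀ : M ≠ ⊥)
    (hτ : TIsSmooth τ) (hl : Function.Injective (matrixCoeff τ l)) :
    GRep.Iso (piZeroT (GRep.sub (repCx k ψ) hM)) τ ↔
      M = cbOfGerms (LinearMap.range (germ k ∘ₗ matrixCoeff τ l)) := by
  rw [piZeroT_iso_iff_map_germ_eq hψ hψ₁ hM hMC hM₀ hτ hl]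
  constructor <;> intro h
  · rw [← h, cbOfGerms_map_germ hψ hψ₁ hM hMC hM₀]
  · rw [h, map_germ_cbOfGerms]
    rintro _ ⟨x, rfl⟩
    exact ⟨⟨_, hτ.isLocallyConstant_matrixCoeff l x⟩, rfl⟩

end SubmodulesOfCb

theorem statement10_general
    (ψ : AddChar K ℂ) (hψlc : IsLocallyConstant (⇑ψ)) (hψne : ψ ≠ 1)
    {X : Type*} [AddCommGroup X] [Module ℂ X] [Module.Finite ℂ X]
    (τ : Representation ℂ Kˣ X) (hτ : TIsSmooth τ) (hcyc : TCyclic τ) :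
    ∃! M : Submodule ℂ (Kˣ → ℂ),
      ∃ hM : GRep.Invariant (repCx K ψ) M, M ≤ Cb K ∧
        (∃ c : CompSeries (GRep.sub (repCx K ψ) hM), c.deg (SRep ψ hψlc) = 1) ∧
        GRep.Iso (piZeroT (GRep.sub (repCx K ψ) hM)) τ := by
  obtain ⟨l, hl⟩ := hcyc.exists_injective_matrixCoeff
  let M₀ : Submodule ℂ (Kˣ → ℂ) := cbOfGerms (LinearMap.range (germ K ∘ₗ matrixCoeff τ l))
  have deg_iff {M : Submodule ℂ (Kˣ → ℂ)} (hM : GRep.Invariant (repCx K ψ) M) (hMC : M ≤ Cb K)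
      (hiso : GRep.Iso (piZeroT (GRep.sub (repCx K ψ) hM)) τ) :
      (∃ c : CompSeries (GRep.sub (repCx K ψ) hM), c.deg (SRep ψ hψlc) = 1) ↔ M ≠ ⊥ := by
    obtain ⟨e, -⟩ := hiso
    have := Module.Finite.equiv e.symm
    exact exists_compSeries_deg_SRep_eq_one_iff hψlc hψne hM hMC
  refine ⟨M₀, ?_, fun M ⟨hM, hMC, hdeg, hiso⟩ => ?_⟩
  · have hM : GRep.Invariant (repCx K ψ) M₀ := cbOfGerms_invariant hψlc <|
      GRep.range_invariant _ _ _ (equivariant_germ_comp_matrixCoeff τ l)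
    have hM₀ : M₀ ≠ ⊥ := cbOfGerms_ne_bot hψlc hψne _
    have hiso := (piZeroT_iso_iff_eq_cbOfGerms hψlc hψne hM inf_le_left hM₀ hτ hl).2 rfl
    exact ⟨hM, inf_le_left, (deg_iff hM inf_le_left hiso).2 hM₀, hiso⟩
  · have hM₀ := (deg_iff hM hMC hiso).1 hdeg
    exact (piZeroT_iso_iff_eq_cbOfGerms hψlc hψne hM hMC hM₀ hτ hl).1 hiso

theorem statement10
    (hchar : (2 : K) ≠ 0)
    (ψ : AddChar K ℂ) (hψlc : IsLocallyConstant (⇑ψ)) (hψne : ψ ≠ 1)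
    {X : Type*} [AddCommGroup X] [Module ℂ X] [Module.Finite ℂ X]
    (τ : Representation ℂ Kˣ X) (hτ : TIsSmooth τ) (hcyc : TCyclic τ) :
    ∃! M : Submodule ℂ (Kˣ → ℂ),
      ∃ hM : GRep.Invariant (repCx K ψ) M, M ≤ Cb K ∧
        (∃ c : CompSeries (GRep.sub (repCx K ψ) hM), c.deg (SRep ψ hψlc) = 1) ∧
        GRep.Iso (piZeroT (GRep.sub (repCx K ψ) hM)) τ :=
  statement10_general ψ hψlc hψne τ hτ hcyc

end Statements

end PSW
end
end
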